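/- Let A be a split quasi-hereditary algebra over a commutative Noetherian ring R with standard modules {Δ(λ) : λ ∈ Λ}. Then there exists a collection of A-modules {∇(λ) : λ ∈ Λ}, unique up to isomorphism, such that (A^op, {D∇(λ)}) is a split quasi-hereditary R-algebra and for all λ, β ∈ Λ and i ≥ 0: Ext^i_A(Δ(λ), ∇(β)) ≅ R if i = 0 and λ = β, and Ext^i_A(Δ(λ), ∇(β)) = 0 otherwise. -/

import Mathlib

open scoped TensorProduct
open CategoryTheory

noncomputable section

section Core

variable (R : Type) [CommRing R] (A : Type) [Ring A] [Algebra R A]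

/-- The action of `a : A` on an `A`-module as an `R`-linear endomorphism. -/
def actL (M : Type) [AddCommGroup M] [Module R M] [Module A M] [IsScalarTower R A M]
    (a : A) : M →ₗ[R] M where
  toFun m := a • m
  map_add' := smul_add a
  map_smul' r m := (smul_comm r a m).symm

/-- The right `A`-module (i.e. `Aᵐᵒᵖ`-module) structure on the `R`-linear dual of a left
`A`-module `M`, given by `(aᵒᵖ • f) m = f (a • m)`. -/
instance dualModule (M : Type) [AddCommGroup M] [Module R M] [Module A M]
    [IsScalarTower R A M] : Module Aᵐᵒᵖ (M →ₗ[R] R) where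
  smul a f := f.comp (actL R A M a.unop)
  one_smul f := by ext m; show f ((1 : Aᵐᵒᵖ).unop • m) = f m; simp
  mul_smul a b f := by
    ext m
    show f ((a * b).unop • m) = f (b.unop • a.unop • m)
    simp [mul_smul]
  smul_zero a := rfl
  smul_add a f g := rfl
  add_smul a b f := by
    ext m
    show f ((a + b).unop • m) = f (a.unop • m) + f (b.unop • m)
    simp [add_smul]
  zero_smul f := by ext m; show f ((0 : Aᵐᵒᵖ).unop • m) = 0; simp

@[simp] lemma dualModule_smul_apply (M : Type) [AddCommGroup M] [Module R M] [Module A M]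
    [IsScalarTower R A M] (a : Aᵐᵒᵖ) (f : M →ₗ[R] R) (m : M) :
    (a • f) m = f (a.unop • m) := rfl

instance dualTower (M : Type) [AddCommGroup M] [Module R M] [Module A M]
    [IsScalarTower R A M] : IsScalarTower R Aᵐᵒᵖ (M →ₗ[R] R) := by
  constructor
  intro r a f
  ext m
  show f ((r • a).unop • m) = r • f (a.unop • m)
  rw [MulOpposite.unop_smul, smul_assoc, map_smul]

/-- The left `A`-module structure on the `R`-linear dual of a right `A`-module
(i.e. an `Aᵐᵒᵖ`-module) `M`, given by `(a • f) m = f (aᵒᵖ • m)`. -/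
instance dualModule' (M : Type) [AddCommGroup M] [Module R M] [Module Aᵐᵒᵖ M]
    [IsScalarTower R Aᵐᵒᵖ M] : Module A (M →ₗ[R] R) where
  smul a f := f.comp (actL R Aᵐᵒᵖ M (MulOpposite.op a))
  one_smul f := by ext m; show f (MulOpposite.op (1 : A) • m) = f m; simp
  mul_smul a b f := by
    ext m
    show f (MulOpposite.op (a * b) • m) = f (MulOpposite.op b • MulOpposite.op a • m)
    rw [MulOpposite.op_mul, mul_smul]
  smul_zero a := rfl
  smul_add a f g := rfl
  add_smul a b f := by
    ext m
    show f (MulOpposite.op (a + b) • m) = f (MulOpposite.op a • m) + f (MulOpposite.op b • m)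
    rw [MulOpposite.op_add, add_smul, map_add]
  zero_smul f := by ext m; show f (MulOpposite.op (0 : A) • m) = 0; simp

@[simp] lemma dualModule'_smul_apply (M : Type) [AddCommGroup M] [Module R M] [Module Aᵐᵒᵖ M]
    [IsScalarTower R Aᵐᵒᵖ M] (a : A) (f : M →ₗ[R] R) (m : M) :
    (a • f) m = f (MulOpposite.op a • m) := rfl

instance dualTower' (M : Type) [AddCommGroup M] [Module R M] [Module Aᵐᵒᵖ M]
    [IsScalarTower R Aᵐᵒᵖ M] : IsScalarTower R A (M →ₗ[R] R) := by
  constructor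
  intro r a f
  ext m
  show f (MulOpposite.op (r • a) • m) = r • f (MulOpposite.op a • m)
  rw [MulOpposite.op_smul, smul_assoc, map_smul]

variable (Λ : Type) [Fintype Λ] [PartialOrder Λ]

/-- Data witnessing that `X` is isomorphic to `Δ(λ) ⊗_R U` for some `λ ∈ S` and some finitely
generated projective `R`-module `U`. -/
structure TensorFactor (Δ : Λ → Type) [∀ l, AddCommGroup (Δ l)] [∀ l, Module R (Δ l)]
    [∀ l, Module A (Δ l)] [∀ l, IsScalarTower R A (Δ l)]
    (S : Set Λ) (X : Type) [AddCommGroup X] [Module A X] : Type 1 where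
  lam : Λ
  mem : lam ∈ S
  U : ModuleCat.{0} R
  fin : Module.Finite R U
  proj : Module.Projective R U
  iso : X ≃ₗ[A] (TensorProduct R (Δ lam) U)

/-- `M` belongs to `F(Δ̃_S)`: it is a finitely generated `A`-module with a finite filtration
whose factors are of the form `Δ(λ) ⊗_R U`, `λ ∈ S`, `U` a finitely generated projective
`R`-module. -/
def InFilt (Δ : Λ → Type) [∀ l, AddCommGroup (Δ l)] [∀ l, Module R (Δ l)]
    [∀ l, Module A (Δ l)] [∀ l, IsScalarTower R A (Δ l)]
    (S : Set Λ) (M : Type) [AddCommGroup M] [Module A M] : Prop :=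
  Module.Finite A M ∧
  ∃ (n : ℕ) (c : Fin (n + 1) → Submodule A M), c 0 = ⊥ ∧ c (Fin.last n) = ⊤ ∧ Monotone c ∧
    ∀ i : Fin n, Nonempty (TensorFactor R A Λ Δ S
      (↥(c i.succ) ⧸ (Submodule.comap (c i.succ).subtype (c i.castSucc))))

/-- Data witnessing that `X` is isomorphic to `F(λ)` for some `λ ∈ S`. -/
structure PlainFactor (F : Λ → Type) [∀ l, AddCommGroup (F l)] [∀ l, Module A (F l)]
    (S : Set Λ) (X : Type) [AddCommGroup X] [Module A X] : Type 1 where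
  lam : Λ
  mem : lam ∈ S
  iso : X ≃ₗ[A] F lam

/-- `M` has a finite filtration with factors among the modules `F(λ)`, `λ ∈ S`. -/
def InFiltPlain (F : Λ → Type) [∀ l, AddCommGroup (F l)] [∀ l, Module A (F l)]
    (S : Set Λ) (M : Type) [AddCommGroup M] [Module A M] : Prop :=
  Module.Finite A M ∧
  ∃ (n : ℕ) (c : Fin (n + 1) → Submodule A M), c 0 = ⊥ ∧ c (Fin.last n) = ⊤ ∧ Monotone c ∧
    ∀ i : Fin n, Nonempty (PlainFactor A Λ F S
      (↥(c i.succ) ⧸ (Submodule.comap (c i.succ).subtype (c i.castSucc))))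

/-- `X` is a direct summand of `Y` (as `A`-modules). -/
def IsDirectSummand (X Y : Type) [AddCommGroup X] [Module A X] [AddCommGroup Y]
    [Module A Y] : Prop :=
  ∃ (i : X →ₗ[A] Y) (p : Y →ₗ[A] X), p.comp i = LinearMap.id

/-- `X` belongs to the additive closure `add T`. -/
def InAdd (T : Type) [AddCommGroup T] [Module A T] (X : Type) [AddCommGroup X]
    [Module A X] : Prop :=
  ∃ n : ℕ, IsDirectSummand A X (Fin n → T)

/-- A split quasi-hereditary structure on the `R`-algebra `A` with standard modules
`Δ(λ)`, `λ ∈ Λ` (following Rouquier's module-theoretic definition). -/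
structure SplitQH (Δ : Λ → Type) [∀ l, AddCommGroup (Δ l)] [∀ l, Module R (Δ l)]
    [∀ l, Module A (Δ l)] [∀ l, IsScalarTower R A (Δ l)] : Type 1 where
  algFin : Module.Finite R A
  algProj : Module.Projective R A
  deltaFinA : ∀ l, Module.Finite A (Δ l)
  deltaFinR : ∀ l, Module.Finite R (Δ l)
  deltaProjR : ∀ l, Module.Projective R (Δ l)
  hom_le : ∀ l m : Λ, (∃ f : Δ l →ₗ[A] Δ m, f ≠ 0) → l ≤ m
  endIso : ∀ l, Nonempty ((Module.End A (Δ l)) ≃ₐ[R] R)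
  P : Λ → ModuleCat.{0} A
  P_proj : ∀ l, Module.Projective A (P l)
  P_fin : ∀ l, Module.Finite A (P l)
  epi : ∀ l, (P l : Type) →ₗ[A] Δ l
  epi_surj : ∀ l, Function.Surjective (epi l)
  ker_filt : ∀ l, InFilt R A Λ Δ {m | l < m} ↥(LinearMap.ker (epi l))
  add_gen : ∀ (Q : ModuleCat.{0} A), Module.Finite A Q → Module.Projective A Q →
    InAdd A (∀ l, (P l : Type)) Q

/-- Vanishing of `Ext^i_A(M, N)` (computed in the abelian category of `A`-modules). -/
def extVanish (M : Type) [AddCommGroup M] [Module A M] (N : Type) [AddCommGroup N]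
    [Module A N] (i : ℕ) : Prop :=
  Subsingleton (((Ext ℤ (ModuleCat.{0} A) i).obj
    (Opposite.op (ModuleCat.of A M))).obj (ModuleCat.of A N))

/-- `∇` is a family of costandard modules for the split quasi-hereditary algebra
`(A, {Δ(λ)})`: the `R`-linear duals `D∇(λ)` make `A^op` split quasi-hereditary (with the same
poset), and the `Ext`-orthogonality relations with the standard modules hold. -/
def IsCostandard (Δ : Λ → Type) [∀ l, AddCommGroup (Δ l)] [∀ l, Module R (Δ l)]
    [∀ l, Module A (Δ l)] [∀ l, IsScalarTower R A (Δ l)]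
    (N : Λ → Type) [∀ l, AddCommGroup (N l)] [∀ l, Module R (N l)]
    [∀ l, Module A (N l)] [∀ l, IsScalarTower R A (N l)] : Prop :=
  Nonempty (SplitQH R Aᵐᵒᵖ Λ (fun l => (N l →ₗ[R] R))) ∧
  (∀ l, Nonempty ((Δ l →ₗ[A] N l) ≃ₗ[R] R)) ∧
  (∀ l m, l ≠ m → ∀ f : Δ l →ₗ[A] N m, f = 0) ∧
  (∀ l m : Λ, ∀ i : ℕ, 0 < i → extVanish A (Δ l) (N m) i)

/-- A bundled family of costandard modules. -/
structure CostandardFamily (Δ : Λ → Type) [∀ l, AddCommGroup (Δ l)] [∀ l, Module R (Δ l)]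
    [∀ l, Module A (Δ l)] [∀ l, IsScalarTower R A (Δ l)] : Type 1 where
  Nab : Λ → Type
  [acg : ∀ l, AddCommGroup (Nab l)]
  [modR : ∀ l, Module R (Nab l)]
  [modA : ∀ l, Module A (Nab l)]
  [tower : ∀ l, IsScalarTower R A (Nab l)]
  cost : IsCostandard R A Λ Δ Nab

attribute [instance] CostandardFamily.acg CostandardFamily.modR CostandardFamily.modA
  CostandardFamily.tower

/-- `T` is a family of (partial) tilting modules forming a characteristic tilting module
`⊕ T(λ)`: each `T(λ)` admits an exact sequence `0 → Δ(λ) → T(λ) → X(λ) → 0` with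
`X(λ) ∈ F(Δ̃_{μ<λ})` and an exact sequence `0 → Y(λ) → T(λ) → ∇(λ) → 0` with
`Y(λ) ∈ F(∇̃_{μ<λ})`. -/
def IsCharTilting (Δ : Λ → Type) [∀ l, AddCommGroup (Δ l)] [∀ l, Module R (Δ l)]
    [∀ l, Module A (Δ l)] [∀ l, IsScalarTower R A (Δ l)]
    (N : Λ → Type) [∀ l, AddCommGroup (N l)] [∀ l, Module R (N l)]
    [∀ l, Module A (N l)] [∀ l, IsScalarTower R A (N l)]
    (T : Λ → Type) [∀ l, AddCommGroup (T l)] [∀ l, Module A (T l)] : Prop :=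
  ∀ l : Λ,
    (∃ f : Δ l →ₗ[A] T l, Function.Injective f ∧
      InFilt R A Λ Δ {m | m < l} ((T l) ⧸ LinearMap.range f)) ∧
    (∃ g : T l →ₗ[A] N l, Function.Surjective g ∧
      InFilt R A Λ N {m | m < l} ↥(LinearMap.ker g))

end Core

end

lemma extVanish_iff {A : Type} [Ring A] (M : Type) [AddCommGroup M] [Module A M] (N : Type)
    [AddCommGroup N] [Module A N] (i : ℕ) :
    extVanish A M N (i + 1) ↔
      Subsingleton (Abelian.Ext (ModuleCat.of A M) (ModuleCat.of A N) (i + 1)) := by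
  let Q := projectiveResolution (ModuleCat.of A M)
  have key : extVanish A M N (i + 1) ↔
      ∀ f : Q.complex.X (i + 1) ⟶ ModuleCat.of A N, Q.complex.d (i + 2) (i + 1) ≫ f = 0 →
        ∃ g : Q.complex.X i ⟶ ModuleCat.of A N, Q.complex.d (i + 1) i ≫ g = f := by
    unfold extVanish
    rw [← ModuleCat.isZero_iff_subsingleton,
      (Q.isoExt (R := ℤ) (i + 1) (ModuleCat.of A N)).isZero_iff,
      ← HomologicalComplex.exactAt_iff_isZero_homology,
      HomologicalComplex.exactAt_iff' _ i (i + 1) (i + 2) (by simp) (by simp),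
      ShortComplex.moduleCat_exact_iff]
    rfl
  rw [key]
  constructor
  · intro h
    refine ⟨fun x y => ?_⟩
    suffices ∀ z : Abelian.Ext (ModuleCat.of A M) (ModuleCat.of A N) (i + 1), z = 0 by
      rw [this x, this y]
    intro z
    obtain ⟨f, hf, rfl⟩ := Q.extMk_surjective z (i + 2) rfl
    exact (Q.extMk_eq_zero_iff f (i + 2) rfl hf i rfl).2 (h f hf)
  · intro h f hf
    exact (Q.extMk_eq_zero_iff f (i + 2) rfl hf i rfl).1 (Subsingleton.elim _ _)

section

variable {A : Type} [Ring A] {M' M X N : Type} [AddCommGroup M'] [Module A M'] [AddCommGroup M]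
  [Module A M] [AddCommGroup X] [Module A X] [AddCommGroup N] [Module A N]

/-- The short complex of modules attached to an exact pair of linear maps. -/
abbrev moduleShortComplex (ι : M' →ₗ[A] M) (π : M →ₗ[A] X) (hex : Function.Exact ι π) :
    ShortComplex (ModuleCat.{0} A) :=
  ShortComplex.mk (ModuleCat.ofHom ι) (ModuleCat.ofHom π)
    (by ext x; exact hex.apply_apply_eq_zero x)

lemma moduleShortComplex_shortExact (ι : M' →ₗ[A] M) (π : M →ₗ[A] X) (hex : Function.Exact ι π)
    (hι : Function.Injective ι) (hπ : Function.Surjective π) :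
    (moduleShortComplex ι π hex).ShortExact where
  exact := (ShortComplex.ShortExact.moduleCat_exact_iff_function_exact _).mpr hex
  mono_f := (ModuleCat.mono_iff_injective _).mpr hι
  epi_g := (ModuleCat.epi_iff_surjective _).mpr hπ

/-- If `Ext¹(X, N) = 0`, maps into `N` extend along injections with cokernel `X`. -/
lemma exists_extend_of_extVanish (ι : M' →ₗ[A] M) (π : M →ₗ[A] X) (hex : Function.Exact ι π)
    (hι : Function.Injective ι) (hπ : Function.Surjective π) (hX : extVanish A X N 1)
    (f : M' →ₗ[A] N) : ∃ g : M →ₗ[A] N, g ∘ₗ ι = f := by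
  have hS := moduleShortComplex_shortExact ι π hex hι hπ
  have := (extVanish_iff X N 0).1 hX
  obtain ⟨x, hx⟩ := Abelian.Ext.contravariant_sequence_exact₁ hS (ModuleCat.of A N)
    (Abelian.Ext.mk₀ (ModuleCat.ofHom f)) (n₁ := 1) rfl (Subsingleton.elim _ _)
  obtain ⟨g, rfl⟩ := (Abelian.Ext.mk₀_bijective _ _).2 x
  refine ⟨g.hom, ?_⟩
  rw [Abelian.Ext.mk₀_comp_mk₀] at hx
  have := (Abelian.Ext.mk₀_bijective _ _).1 hx
  exact congrArg ModuleCat.Hom.hom this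

/-- If maps into `N` extend along the kernel of a projective presentation of `X`, then
`Ext¹(X, N) = 0`. -/
lemma extVanish_one_of_extend (ι : M' →ₗ[A] M) (π : M →ₗ[A] X) (hex : Function.Exact ι π)
    (hι : Function.Injective ι) (hπ : Function.Surjective π) [Module.Projective A M]
    (h : ∀ f : M' →ₗ[A] N, ∃ g : M →ₗ[A] N, g ∘ₗ ι = f) : extVanish A X N 1 := by
  have hS := moduleShortComplex_shortExact ι π hex hι hπ
  have : Projective (ModuleCat.of A M) := (IsProjective.iff_projective _).1 inferInstance
  rw [extVanish_iff X N 0]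
  refine subsingleton_of_forall_eq 0 fun x => ?_
  obtain ⟨y, rfl⟩ := Abelian.Ext.contravariant_sequence_exact₃ hS (ModuleCat.of A N) x
    (Abelian.Ext.eq_zero_of_projective (P := ModuleCat.of A M) (n := 0) _) (n₀ := 0) rfl
  obtain ⟨f, rfl⟩ := (Abelian.Ext.mk₀_bijective _ _).2 y
  obtain ⟨g, hg⟩ := h f.hom
  have : f = (moduleShortComplex ι π hex).f ≫ ModuleCat.ofHom g := by
    ext1; exact hg.symm
  rw [this, ← Abelian.Ext.mk₀_comp_mk₀, hS.extClass_comp_assoc]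

/-- Dimension shifting along a projective presentation. -/
lemma extVanish_succ_of_projective (ι : M' →ₗ[A] M) (π : M →ₗ[A] X) (hex : Function.Exact ι π)
    (hι : Function.Injective ι) (hπ : Function.Surjective π) [Module.Projective A M] (i : ℕ)
    (h : extVanish A M' N (i + 1)) : extVanish A X N (i + 2) := by
  have hS := moduleShortComplex_shortExact ι π hex hι hπ
  have : Projective (ModuleCat.of A M) := (IsProjective.iff_projective _).1 inferInstance
  rw [extVanish_iff] at h ⊢
  refine subsingleton_of_forall_eq 0 fun x => ?_
  obtain ⟨y, rfl⟩ := Abelian.Ext.contravariant_sequence_exact₃ hS (ModuleCat.of A N) x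
    (Abelian.Ext.eq_zero_of_projective (P := ModuleCat.of A M) (n := i + 1) _) (n₀ := i + 1)
    (by omega)
  rw [show y = 0 from Subsingleton.elim (α := Abelian.Ext (ModuleCat.of A M') _ _) _ _]
  simp

/-- `Ext` vanishing is inherited by extensions. -/
lemma extVanish_of_exact (ι : M' →ₗ[A] M) (π : M →ₗ[A] X) (hex : Function.Exact ι π)
    (hι : Function.Injective ι) (hπ : Function.Surjective π) (i : ℕ)
    (h' : extVanish A M' N (i + 1)) (h : extVanish A X N (i + 1)) : extVanish A M N (i + 1) := by
  have hS := moduleShortComplex_shortExact ι π hex hι hπ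
  rw [extVanish_iff] at h h' ⊢
  refine subsingleton_of_forall_eq 0 fun x => ?_
  obtain ⟨y, rfl⟩ := Abelian.Ext.contravariant_sequence_exact₂ hS (ModuleCat.of A N) x
    (Subsingleton.elim (α := Abelian.Ext (ModuleCat.of A M') _ _) _ _)
  rw [show y = 0 from Subsingleton.elim (α := Abelian.Ext (ModuleCat.of A X) _ _) _ _]
  simp

/-- `Ext` vanishing is inherited by direct summands. -/
lemma extVanish_of_retract (a : X →ₗ[A] M) (b : M →ₗ[A] X) (hab : b ∘ₗ a = LinearMap.id) (i : ℕ)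
    (h : extVanish A M N (i + 1)) : extVanish A X N (i + 1) := by
  rw [extVanish_iff] at h ⊢
  refine subsingleton_of_forall_eq 0 fun x => ?_
  have h1 : ModuleCat.ofHom a ≫ ModuleCat.ofHom b = 𝟙 (ModuleCat.of A X) := by
    ext1; exact hab
  rw [← Abelian.Ext.mk₀_id_comp x, ← h1, ← Abelian.Ext.mk₀_comp_mk₀,
    Abelian.Ext.comp_assoc_of_second_deg_zero,
    Subsingleton.elim ((Abelian.Ext.mk₀ (ModuleCat.ofHom b)).comp x (zero_add _)) 0,
    Abelian.Ext.comp_zero]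

lemma extVanish_of_subsingleton [Subsingleton X] (i : ℕ) : extVanish A X N (i + 1) := by
  rw [extVanish_iff]
  refine subsingleton_of_forall_eq 0 fun x => ?_
  have : 𝟙 (ModuleCat.of A X) = 0 := by
    ext1; exact Subsingleton.elim (α := X →ₗ[A] X) _ _
  rw [← Abelian.Ext.mk₀_id_comp x, this, Abelian.Ext.mk₀_zero, Abelian.Ext.zero_comp]

end

section Filt

variable (R : Type) [CommRing R] (A : Type) [Ring A] [Algebra R A] {Λ : Type}
  (Δ : Λ → Type) [∀ l, AddCommGroup (Δ l)] [∀ l, Module R (Δ l)]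
  [∀ l, Module A (Δ l)] [∀ l, IsScalarTower R A (Δ l)]

/-- The smallest class of modules containing `Δ(λ)`, `λ ∈ S`, and closed under extensions and
direct summands. -/
inductive StdClass (S : Set Λ) : ∀ (M : Type) [AddCommGroup M] [Module R M] [Module A M]
    [IsScalarTower R A M], Prop
  | zero (M : Type) [AddCommGroup M] [Module R M] [Module A M] [IsScalarTower R A M]
      [Subsingleton M] : StdClass S M
  | std (l : Λ) (hl : l ∈ S) : StdClass S (Δ l)
  | retract (X Y : Type) [AddCommGroup X] [Module R X] [Module A X] [IsScalarTower R A X]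
      [AddCommGroup Y] [Module R Y] [Module A Y] [IsScalarTower R A Y]
      (a : X →ₗ[A] Y) (b : Y →ₗ[A] X) (hab : ∀ x, b (a x) = x) :
      StdClass S Y → StdClass S X
  | ext (M : Type) [AddCommGroup M] [Module R M] [Module A M] [IsScalarTower R A M]
      (N : Submodule A M) : StdClass S N → StdClass S (M ⧸ N) → StdClass S M

variable {R A Δ}
variable {S : Set Λ} {X Y : Type} [AddCommGroup X] [Module R X] [Module A X] [IsScalarTower R A X]
      [AddCommGroup Y] [Module R Y] [Module A Y] [IsScalarTower R A Y]

lemma StdClass.of_equiv (e : X ≃ₗ[A] Y) (h : StdClass R A Δ S Y) : StdClass R A Δ S X :=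
  .retract X Y e.toLinearMap e.symm.toLinearMap e.symm_apply_apply h

lemma StdClass.mono {T : Set Λ} (hST : S ⊆ T) (h : StdClass R A Δ S X) : StdClass R A Δ T X := by
  induction h with
  | zero M => exact .zero M
  | std l hl => exact .std l (hST hl)
  | retract X Y a b hab _ ih => exact .retract X Y a b hab ih
  | ext M N _ _ ih₁ ih₂ => exact .ext M N ih₁ ih₂

lemma StdClass.of_surjective (π : X →ₗ[A] Y) (hπ : Function.Surjective π)
    (hk : StdClass R A Δ S (LinearMap.ker π)) (hY : StdClass R A Δ S Y) : StdClass R A Δ S X :=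
  .ext X (LinearMap.ker π) hk (hY.of_equiv (π.quotKerEquivOfSurjective hπ))

lemma StdClass.pi_fin (n : ℕ) (M : Fin n → Type) [∀ i, AddCommGroup (M i)] [∀ i, Module R (M i)]
    [∀ i, Module A (M i)] [∀ i, IsScalarTower R A (M i)] (h : ∀ i, StdClass R A Δ S (M i)) :
    StdClass R A Δ S (∀ i, M i) := by
  induction n with
  | zero => exact .zero _
  | succ n ih =>
    refine .of_surjective (LinearMap.proj (0 : Fin (n + 1)) : (∀ i, M i) →ₗ[A] M 0)
      (LinearMap.proj_surjective 0) ?_ (h 0)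
    have := ih (fun i => M i.succ) (fun i => h i.succ)
    refine .retract _ _
      ((LinearMap.pi fun i : Fin n => LinearMap.proj i.succ) ∘ₗ Submodule.subtype _)
      (LinearMap.codRestrict _ (LinearMap.pi (Fin.cons 0 fun i => LinearMap.proj i)) ?_) ?_ this
    · intro c
      simp
    · rintro ⟨x, hx⟩
      ext i
      refine Fin.cases ?_ (fun i => ?_) i
      · simpa using hx.symm
      · simp

lemma StdClass.pi {ι : Type} [Finite ι] (M : ι → Type) [∀ i, AddCommGroup (M i)]
    [∀ i, Module R (M i)] [∀ i, Module A (M i)] [∀ i, IsScalarTower R A (M i)]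
    (h : ∀ i, StdClass R A Δ S (M i)) : StdClass R A Δ S (∀ i, M i) := by
  obtain ⟨n, ⟨e⟩⟩ := Finite.exists_equiv_fin ι
  have := StdClass.pi_fin n (fun i => M (e.symm i)) (fun i => h _)
  exact this.of_equiv (LinearEquiv.piCongrLeft A M e.symm).symm

lemma StdClass.tensor (U : Type) [AddCommGroup U] [Module R U] [Module.Finite R U]
    [Module.Projective R U] (h : StdClass R A Δ S X) : StdClass R A Δ S (X ⊗[R] U) := by
  obtain ⟨n, f, g, -, -, hfg⟩ := Module.Finite.exists_comp_eq_id_of_projective R U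
  let e := TensorProduct.AlgebraTensorModule.rid R A X
  refine .retract _ (Fin n → X)
    (LinearMap.pi fun i => e.toLinearMap ∘ₗ
      TensorProduct.AlgebraTensorModule.lTensor A X (LinearMap.proj i ∘ₗ g))
    (∑ i, TensorProduct.AlgebraTensorModule.lTensor A X (f ∘ₗ LinearMap.single R (fun _ => R) i) ∘ₗ
      e.symm.toLinearMap ∘ₗ LinearMap.proj i) (fun x => ?_) (StdClass.pi_fin n _ fun _ => h)
  induction x with
  | zero => simp
  | add x y hx hy => rw [map_add, map_add, hx, hy]
  | tmul x u =>
    have hu : ∑ i, f (Pi.single i (g u i)) = u := by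
      conv_rhs => rw [← LinearMap.id_apply (R := R) u, ← hfg, LinearMap.comp_apply,
        ← Finset.univ_sum_single (g u), map_sum]
    conv_rhs => rw [← hu, TensorProduct.tmul_sum]
    simp only [e, LinearMap.sum_apply, LinearMap.comp_apply, LinearMap.pi_apply, LinearMap.proj_apply,
      LinearEquiv.coe_coe, TensorProduct.AlgebraTensorModule.lTensor_tmul,
      TensorProduct.AlgebraTensorModule.rid_tmul, TensorProduct.AlgebraTensorModule.rid_symm_apply,
      LinearMap.single_apply]
    refine Finset.sum_congr rfl fun i _ => ?_
    rw [TensorProduct.smul_tmul, ← map_smul, ← Pi.single_smul, smul_eq_mul, mul_one]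

lemma InFilt.stdClass (h : InFilt R A Λ Δ S X) : StdClass R A Δ S X := by
  obtain ⟨-, n, c, h0, hn, hmono, hc⟩ := h
  have key : ∀ i : Fin (n + 1), StdClass R A Δ S (c i) := by
    intro i
    induction i using Fin.induction with
    | zero =>
      have : Subsingleton (c 0) := by rw [h0]; infer_instance
      exact .zero _
    | succ i ih =>
      have hle : c i.castSucc ≤ c i.succ := hmono i.castSucc_lt_succ.le
      obtain ⟨⟨l, hl, U, hU, hU', e⟩⟩ := hc i
      refine .ext _ (Submodule.comap (c i.succ).subtype (c i.castSucc)) ?_ ?_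
      · exact ih.of_equiv (Submodule.comapSubtypeEquivOfLe hle)
      · exact ((StdClass.std l hl).tensor U).of_equiv e
  have := key (Fin.last n)
  rw [hn] at this
  exact this.of_equiv Submodule.topEquiv.symm

end Filt

section Trace

variable (A : Type) [Ring A] {Λ : Type} (P : Λ → Type) [∀ l, AddCommGroup (P l)]
  [∀ l, Module A (P l)]

/-- The trace in `M` of the modules `P(μ)`, `μ ∈ T`. -/
def stdTrace (T : Set Λ) (M : Type) [AddCommGroup M] [Module A M] : Submodule A M :=
  Submodule.span A {x | ∃ μ ∈ T, ∃ (f : P μ →ₗ[A] M) (p : P μ), f p = x}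

variable {A P} {T : Set Λ} {M M' X : Type} [AddCommGroup M] [Module A M] [AddCommGroup M']
  [Module A M'] [AddCommGroup X] [Module A X]

lemma mem_trace_of_hom {μ : Λ} (hμ : μ ∈ T) (f : P μ →ₗ[A] M) (p : P μ) : f p ∈ stdTrace A P T M :=
  Submodule.subset_span ⟨μ, hμ, f, p, rfl⟩

lemma map_mem_trace (g : M →ₗ[A] M') {x : M} (hx : x ∈ stdTrace A P T M) : g x ∈ stdTrace A P T M' := by
  induction hx using Submodule.span_induction with
  | mem x h =>
    obtain ⟨μ, hμ, f, p, rfl⟩ := h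
    exact mem_trace_of_hom hμ (g ∘ₗ f) p
  | zero => simp
  | add x y _ _ hx hy => rw [map_add]; exact add_mem hx hy
  | smul a x _ hx => rw [map_smul]; exact Submodule.smul_mem _ _ hx

lemma trace_mono {T' : Set Λ} (h : T ⊆ T') : stdTrace A P T M ≤ stdTrace A P T' M :=
  Submodule.span_mono fun _ ⟨μ, hμ, hf⟩ => ⟨μ, h hμ, hf⟩

lemma trace_eq_bot (h : ∀ μ ∈ T, ∀ f : P μ →ₗ[A] M, f = 0) : stdTrace A P T M = ⊥ := by
  rw [stdTrace, Submodule.span_eq_bot]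
  rintro _ ⟨μ, hμ, f, p, rfl⟩
  rw [h μ hμ f, LinearMap.zero_apply]

lemma exists_mem_trace_of_surjective [∀ l, Module.Projective A (P l)] (π : M →ₗ[A] X)
    (hπ : Function.Surjective π) {y : X} (hy : y ∈ stdTrace A P T X) : ∃ x ∈ stdTrace A P T M, π x = y := by
  induction hy using Submodule.span_induction with
  | mem x h =>
    obtain ⟨μ, hμ, f, p, rfl⟩ := h
    obtain ⟨g, hg⟩ := Module.projective_lifting_property π f hπ
    exact ⟨g p, mem_trace_of_hom hμ g p, by rw [← hg]; rfl⟩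
  | zero => exact ⟨0, zero_mem _, map_zero _⟩
  | add x y _ _ hx hy =>
    obtain ⟨x, hx, rfl⟩ := hx
    obtain ⟨y, hy, rfl⟩ := hy
    exact ⟨x + y, add_mem hx hy, map_add _ _ _⟩
  | smul a x _ hx =>
    obtain ⟨x, hx, rfl⟩ := hx
    exact ⟨a • x, Submodule.smul_mem _ _ hx, map_smul _ _ _⟩

lemma exists_factor_of_exact {Q : Type} [AddCommGroup Q] [Module A Q] {ι : M' →ₗ[A] M}
    {π : M →ₗ[A] X} (hι : Function.Injective ι) (hex : Function.Exact ι π) (f : Q →ₗ[A] M)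
    (hf : ∀ q, π (f q) = 0) : ∃ f' : Q →ₗ[A] M', ∀ q, ι (f' q) = f q := by
  have hr : ∀ q, f q ∈ LinearMap.range ι := fun q => (hex (f q)).1 (hf q)
  refine ⟨(LinearEquiv.ofInjective ι hι).symm.toLinearMap ∘ₗ f.codRestrict _ hr, fun q => ?_⟩
  have := (LinearEquiv.ofInjective ι hι).apply_symm_apply (f.codRestrict _ hr q)
  exact congrArg Subtype.val this

lemma exists_dual_basis (Q : Type) [AddCommGroup Q] [Module A Q] [Module.Finite A Q]
    [Module.Projective A Q] :
    ∃ (n : ℕ) (k : Fin n → Q →ₗ[A] A) (q : Fin n → Q), ∀ x, ∑ i, k i x • q i = x := by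
  obtain ⟨n, f, g, -, -, hfg⟩ := Module.Finite.exists_comp_eq_id_of_projective A Q
  refine ⟨n, fun i => LinearMap.proj i ∘ₗ g, fun i => f (Pi.single i 1), fun x => ?_⟩
  conv_rhs => rw [← LinearMap.id_apply (R := A) x, ← hfg, LinearMap.comp_apply,
    ← Finset.univ_sum_single (g x), map_sum]
  refine Finset.sum_congr rfl fun i _ => ?_
  rw [← map_smul, ← Pi.single_smul, smul_eq_mul, mul_one]
  rfl

/-- A map from a finitely generated projective module into the trace is a sum of maps factoring
through the modules `P(μ)`, `μ ∈ T`. -/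
lemma mem_closure_of_range_le_trace {Q : Type} [AddCommGroup Q] [Module A Q] [Module.Finite A Q]
    [Module.Projective A Q] (f : Q →ₗ[A] M) (hf : ∀ x, f x ∈ stdTrace A P T M) :
    f ∈ AddSubmonoid.closure
      {g | ∃ μ ∈ T, ∃ (F : P μ →ₗ[A] M) (h : Q →ₗ[A] P μ), F ∘ₗ h = g} := by
  obtain ⟨n, k, q, hkq⟩ := exists_dual_basis (A := A) Q
  have key : ∀ y ∈ stdTrace A P T M, ∀ k : Q →ₗ[A] A, k.smulRight y ∈ AddSubmonoid.closure
      {g | ∃ μ ∈ T, ∃ (F : P μ →ₗ[A] M) (h : Q →ₗ[A] P μ), F ∘ₗ h = g} := by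
    intro y hy
    induction hy using Submodule.span_induction with
    | mem x h =>
      obtain ⟨μ, hμ, F, p, rfl⟩ := h
      intro k
      exact AddSubmonoid.subset_closure ⟨μ, hμ, F, k.smulRight p, by ext; simp⟩
    | zero =>
      intro k
      rw [show k.smulRight (0 : M) = 0 by ext; simp]
      exact zero_mem _
    | add x y _ _ hx hy =>
      intro k
      rw [show k.smulRight (x + y) = k.smulRight x + k.smulRight y by ext; simp]
      exact add_mem (hx k) (hy k)
    | smul a x _ hx =>
      intro k
      rw [show k.smulRight (a • x) = ((LinearMap.toSpanSingleton A A a) ∘ₗ k).smulRight x by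
        ext; simp [mul_smul]]
      exact hx _
  have : f = ∑ i, (k i).smulRight (f (q i)) := by
    ext x
    conv_lhs => rw [← hkq x, map_sum]
    simp
  rw [this]
  exact sum_mem fun i _ => key _ (hf _) _

end Trace

section QH

variable {R : Type} [CommRing R] {A : Type} [Ring A] [Algebra R A] {Λ : Type} [PartialOrder Λ]
  {Δ : Λ → Type} [∀ l, AddCommGroup (Δ l)] [∀ l, Module R (Δ l)]
  [∀ l, Module A (Δ l)] [∀ l, IsScalarTower R A (Δ l)]
  {P : Λ → Type} [∀ l, AddCommGroup (P l)] [∀ l, Module R (P l)]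
  [∀ l, Module A (P l)] [∀ l, IsScalarTower R A (P l)]

/-- The properties of the standard modules `Δ(λ)` and their projective covers `P(λ)` in a split
quasi-hereditary algebra, in terms of the class `StdClass`. -/
structure StdCover (R : Type) [CommRing R] {A : Type} [Ring A] [Algebra R A] {Λ : Type}
    [PartialOrder Λ]
    {Δ : Λ → Type} [∀ l, AddCommGroup (Δ l)] [∀ l, Module R (Δ l)]
    [∀ l, Module A (Δ l)] [∀ l, IsScalarTower R A (Δ l)]
    {P : Λ → Type} [∀ l, AddCommGroup (P l)] [∀ l, Module R (P l)]
    [∀ l, Module A (P l)] [∀ l, IsScalarTower R A (P l)] (epi : ∀ l, P l →ₗ[A] Δ l) : Prop where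
  proj : ∀ l, Module.Projective A (P l)
  fin : ∀ l, Module.Finite A (P l)
  surj : ∀ l, Function.Surjective (epi l)
  hom_le : ∀ l m (f : Δ l →ₗ[A] Δ m), f ≠ 0 → l ≤ m
  endo : ∀ l (f : Δ l →ₗ[A] Δ l), ∃ r : R, ∀ x, f x = r • x
  faithful : ∀ l (r : R), (∀ x : Δ l, r • x = 0) → r = 0
  ker : ∀ l, StdClass R A Δ {m | l < m} (LinearMap.ker (epi l))
  reg : StdClass R A Δ Set.univ A

variable {epi : ∀ l, P l →ₗ[A] Δ l} {S : Set Λ}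
  {M : Type} [AddCommGroup M] [Module R M] [Module A M] [IsScalarTower R A M]

omit [PartialOrder Λ] in
lemma StdClass.hom_eq_zero (h : StdClass R A Δ S M) {N : Type} [AddCommGroup N] [Module A N]
    (hN : ∀ l ∈ S, ∀ f : Δ l →ₗ[A] N, f = 0) (f : M →ₗ[A] N) : f = 0 := by
  induction h with
  | zero M => exact LinearMap.ext fun x => by rw [Subsingleton.elim x 0, map_zero, map_zero]
  | std l hl => exact hN l hl f
  | retract X Y a b hab _ ih =>
    ext x
    rw [← hab x]
    exact LinearMap.congr_fun (ih (f ∘ₗ b)) (a x)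
  | ext M K _ _ ih₁ ih₂ =>
    have h1 : K ≤ LinearMap.ker f := fun x hx => LinearMap.congr_fun (ih₁ (f ∘ₗ K.subtype)) ⟨x, hx⟩
    ext x
    exact LinearMap.congr_fun (ih₂ (K.liftQ f h1)) (K.mkQ x)

namespace StdCover

variable (hP : StdCover R epi)
include hP

lemma hom_le_of_ne_zero {l m : Λ} (f : P l →ₗ[A] Δ m) (hf : f ≠ 0) : l ≤ m := by
  by_contra hlm
  refine hf ?_
  have h1 : LinearMap.ker (epi l) ≤ LinearMap.ker f := fun x hx => by
    refine LinearMap.congr_fun ((hP.ker l).hom_eq_zero (N := Δ m) (fun k hk g => ?_)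
      (f ∘ₗ Submodule.subtype _)) ⟨x, hx⟩
    by_contra hg
    exact hlm ((le_of_lt hk).trans (hP.hom_le k m g hg))
  let e := (epi l).quotKerEquivOfSurjective (hP.surj l)
  have h2 : (LinearMap.ker (epi l)).liftQ f h1 ∘ₗ e.symm.toLinearMap = 0 := by
    by_contra hg
    exact hlm (hP.hom_le l m _ hg)
  ext x
  have h3 := LinearMap.congr_fun h2 (e (Submodule.Quotient.mk x))
  simpa using h3

lemma trace_std_eq_bot {T : Set Λ} {l : Λ} (h : ∀ μ ∈ T, ¬ μ ≤ l) : stdTrace A P T (Δ l) = ⊥ :=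
  trace_eq_bot fun μ hμ f => by
    by_contra hf
    exact h μ hμ (hP.hom_le_of_ne_zero f hf)

lemma mem_trace {T : Set Λ} (hST : S ⊆ T) (h : StdClass R A Δ S M) (x : M) :
    x ∈ stdTrace A P T M := by
  have := hP.proj
  induction h with
  | zero M => rw [Subsingleton.elim x 0]; exact zero_mem _
  | std l hl =>
    obtain ⟨p, rfl⟩ := hP.surj l x
    exact mem_trace_of_hom (hST hl) _ _
  | retract X Y a b hab _ ih =>
    rw [← hab x]
    exact map_mem_trace b (ih (a x))
  | ext M K _ _ ih₁ ih₂ =>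
    obtain ⟨y, hy, hyx⟩ := exists_mem_trace_of_surjective K.mkQ K.mkQ_surjective (ih₂ (K.mkQ x))
    have h1 : x - y ∈ K := by
      rw [← K.ker_mkQ, LinearMap.mem_ker, map_sub, hyx, sub_self]
    rw [← sub_add_cancel x y]
    exact add_mem (map_mem_trace K.subtype (ih₁ ⟨_, h1⟩)) hy

lemma exists_smul_epi {l : Λ} (f : P l →ₗ[A] Δ l) : ∃ r : R, ∀ x, f x = r • epi l x := by
  have h1 : LinearMap.ker (epi l) ≤ LinearMap.ker f := fun x hx => by
    refine LinearMap.congr_fun ((hP.ker l).hom_eq_zero (N := Δ l) (fun k hk g => ?_)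
      (f ∘ₗ Submodule.subtype _)) ⟨x, hx⟩
    by_contra hg
    exact (hP.hom_le k l g hg).not_gt hk
  let e := (epi l).quotKerEquivOfSurjective (hP.surj l)
  obtain ⟨r, hr⟩ := hP.endo l ((LinearMap.ker (epi l)).liftQ f h1 ∘ₗ e.symm.toLinearMap)
  refine ⟨r, fun x => ?_⟩
  rw [← hr]
  have : e (Submodule.Quotient.mk x) = epi l x := rfl
  simp [← this]

end StdCover

/-- `X` is pure with respect to the trace of the `P(μ)`, `μ ∈ T`: for every extension `M` of `X`
by `M'`, the trace in `M` meets `M'` in the trace in `M'`. -/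
def TracePure (A : Type) [Ring A] {Λ : Type} (P : Λ → Type) [∀ l, AddCommGroup (P l)]
    [∀ l, Module A (P l)] (T : Set Λ) (X : Type) [AddCommGroup X] [Module A X] : Prop :=
  ∀ (M' M : Type) [AddCommGroup M'] [Module A M'] [AddCommGroup M] [Module A M]
    (ι : M' →ₗ[A] M) (π : M →ₗ[A] X), Function.Injective ι → Function.Exact ι π →
    Function.Surjective π → ∀ y, ι y ∈ stdTrace A P T M → y ∈ stdTrace A P T M'

lemma StdCover.tracePure_std (hP : StdCover R epi) {T : Set Λ} (hT : IsUpperSet T) (l : Λ) :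
    TracePure A P T (Δ l) := by
  intro M' M _ _ _ _ ι π hι hex hπ y hy
  have := hP.proj
  by_cases hl : l ∈ T
  · obtain ⟨c, hc⟩ := Module.projective_lifting_property π (epi l) hπ
    have hc' : ∀ p, π (c p) = epi l p := fun p => LinearMap.congr_fun hc p
    have key : ∀ x ∈ stdTrace A P T M, ∃ z ∈ stdTrace A P T M', ∃ p, x = ι z + c p := by
      intro x hx
      induction hx using Submodule.span_induction with
      | mem x h =>
        obtain ⟨μ, hμ, f, q, rfl⟩ := h
        obtain ⟨d, hd⟩ := Module.projective_lifting_property (epi l) (π ∘ₗ f) (hP.surj l)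
        obtain ⟨f', hf'⟩ := exists_factor_of_exact hι hex (f - c ∘ₗ d) (fun q => by
          have := LinearMap.congr_fun hd q
          simp only [LinearMap.comp_apply] at this
          simp [hc', this])
        exact ⟨f' q, mem_trace_of_hom hμ _ _, d q, by simp [hf']⟩
      | zero => exact ⟨0, zero_mem _, 0, by simp⟩
      | add x y _ _ hx hy =>
        obtain ⟨z, hz, p, rfl⟩ := hx
        obtain ⟨z', hz', p', rfl⟩ := hy
        exact ⟨z + z', add_mem hz hz', p + p', by simp only [map_add]; abel⟩
      | smul a x _ hx =>
        obtain ⟨z, hz, p, rfl⟩ := hx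
        exact ⟨a • z, Submodule.smul_mem _ _ hz, a • p, by simp⟩
    obtain ⟨z, hz, p, hp⟩ := key _ hy
    have hp0 : p ∈ LinearMap.ker (epi l) := by
      rw [LinearMap.mem_ker, ← hc', ← add_sub_cancel_left (ι z) (c p), ← hp, map_sub,
        hex.apply_apply_eq_zero, hex.apply_apply_eq_zero, sub_zero]
    obtain ⟨f', hf'⟩ := exists_factor_of_exact hι hex (c ∘ₗ (LinearMap.ker (epi l)).subtype)
      (fun q => by simp [hc'])
    have h1 : y = z + f' ⟨p, hp0⟩ := hι (by rw [hp, map_add, hf']; rfl)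
    rw [h1]
    refine add_mem hz (map_mem_trace f' (hP.mem_trace ?_ (hP.ker l) _))
    exact fun m hm => hT (le_of_lt hm) hl
  · have key : ∀ x ∈ stdTrace A P T M, ∃ z ∈ stdTrace A P T M', x = ι z := by
      intro x hx
      induction hx using Submodule.span_induction with
      | mem x h =>
        obtain ⟨μ, hμ, f, q, rfl⟩ := h
        have h0 : π ∘ₗ f = 0 := by
          by_contra h0
          exact hl (hT (hP.hom_le_of_ne_zero _ h0) hμ)
        obtain ⟨f', hf'⟩ := exists_factor_of_exact hι hex f (fun q => LinearMap.congr_fun h0 q)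
        exact ⟨f' q, mem_trace_of_hom hμ _ _, (hf' q).symm⟩
      | zero => exact ⟨0, zero_mem _, by simp⟩
      | add x y _ _ hx hy =>
        obtain ⟨z, hz, rfl⟩ := hx
        obtain ⟨z', hz', rfl⟩ := hy
        exact ⟨z + z', add_mem hz hz', by simp⟩
      | smul a x _ hx =>
        obtain ⟨z, hz, rfl⟩ := hx
        exact ⟨a • z, Submodule.smul_mem _ _ hz, by simp⟩
    obtain ⟨z, hz, hyz⟩ := key _ hy
    rwa [hι hyz]

lemma StdCover.tracePure (hP : StdCover R epi) {T : Set Λ} (hT : IsUpperSet T)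
    (h : StdClass R A Δ S M) : TracePure A P T M := by
  induction h with
  | zero X =>
    intro M' M _ _ _ _ ι π hι hex hπ y hy
    have hs : Function.Surjective ι := fun x => (hex x).1 (Subsingleton.elim _ _)
    have := map_mem_trace (LinearEquiv.ofBijective ι ⟨hι, hs⟩).symm.toLinearMap hy
    rwa [LinearEquiv.coe_coe, show ι y = LinearEquiv.ofBijective ι ⟨hι, hs⟩ y from rfl,
      LinearEquiv.symm_apply_apply] at this
  | std l hl => exact hP.tracePure_std hT l
  | retract X Y a b hab _ ih =>
    intro M' M _ _ _ _ ι π hι hex hπ y hy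
    let ι' : M' →ₗ[A] M × LinearMap.ker b := LinearMap.inl A M _ ∘ₗ ι
    let π' : M × LinearMap.ker b →ₗ[A] Y := (a ∘ₗ π).coprod (LinearMap.ker b).subtype
    have hy' : ι' y ∈ stdTrace A P T (M × LinearMap.ker b) :=
      map_mem_trace (LinearMap.inl A M (LinearMap.ker b)) hy
    refine ih M' (M × LinearMap.ker b) ι' π' ?_ ?_ ?_ y hy'
    · exact LinearMap.inl_injective.comp hι
    · rintro ⟨m, c, hc⟩
      have hc0 : b c = 0 := hc
      constructor
      · intro h0
        have h1 : a (π m) + c = 0 := h0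
        have h2 : π m = 0 := by
          have := congrArg b h1
          rwa [map_add, hab, hc0, add_zero, map_zero] at this
        obtain ⟨z, rfl⟩ := (hex m).1 h2
        refine ⟨z, ?_⟩
        rw [h2, map_zero, zero_add] at h1
        subst h1
        rfl
      · rintro ⟨z, hz⟩
        rw [← hz]
        simp [ι', π', hex.apply_apply_eq_zero]
    · intro y
      obtain ⟨m, hm⟩ := hπ (b y)
      exact ⟨(m, ⟨y - a (b y), by simp [hab]⟩), by simp [π', hm]⟩
  | ext X N _ _ ih₁ ih₂ =>
    intro M' M _ _ _ _ ι π hι hex hπ y hy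
    let π₁ := N.mkQ ∘ₗ π
    have hmem : ∀ z, ι z ∈ LinearMap.ker π₁ := fun z => by
      simp [π₁, hex.apply_apply_eq_zero]
    have hmem' : ∀ z : LinearMap.ker π₁, π z ∈ N := fun z => by
      have : π₁ z = 0 := z.2
      rwa [LinearMap.comp_apply, Submodule.mkQ_apply, Submodule.Quotient.mk_eq_zero] at this
    have h1 := ih₂ (LinearMap.ker π₁) M (LinearMap.ker π₁).subtype π₁ Subtype.val_injective
      (fun x => by simp) (N.mkQ_surjective.comp hπ) ⟨ι y, hmem y⟩ hy
    refine ih₁ M' (LinearMap.ker π₁) (ι.codRestrict _ hmem)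
      ((π ∘ₗ (LinearMap.ker π₁).subtype).codRestrict N hmem') ?_ ?_ ?_ y h1
    · exact fun u v huv => hι (congrArg Subtype.val huv)
    · rintro ⟨z, hz⟩
      constructor
      · intro h0
        obtain ⟨w, rfl⟩ := (hex z).1 (congrArg Subtype.val h0)
        exact ⟨w, rfl⟩
      · rintro ⟨w, hw⟩
        have : z = ι w := (congrArg Subtype.val hw).symm
        subst this
        exact Subtype.ext (hex.apply_apply_eq_zero w)
    · rintro ⟨n, hn⟩
      obtain ⟨m, rfl⟩ := hπ n
      exact ⟨⟨m, by simpa [π₁] using hn⟩, rfl⟩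

end QH

section HomTrace

variable (A : Type) [Ring A] {Λ : Type} (P : Λ → Type) [∀ l, AddCommGroup (P l)]
  [∀ l, Module A (P l)]

/-- The homomorphisms `Q → M` whose image lies in the trace of the `P(μ)`, `μ ∈ T`. -/
def homTrace (S : Type) [Ring S] (T : Set Λ) (Q M : Type) [AddCommGroup Q] [Module A Q]
    [AddCommGroup M] [Module A M] [Module S M] [SMulCommClass A S M] :
    Submodule S (Q →ₗ[A] M) where
  carrier := {f | ∀ x, f x ∈ stdTrace A P T M}
  add_mem' hf hg x := add_mem (hf x) (hg x)
  zero_mem' _ := zero_mem _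
  smul_mem' s _ hf x := map_mem_trace (s • LinearMap.id : M →ₗ[A] M) (hf x)

/-- Homomorphisms `Q → M` modulo those with image in the trace of the `P(μ)`, `μ ∈ T`. -/
abbrev HomQuot (S : Type) [Ring S] (T : Set Λ) (Q M : Type) [AddCommGroup Q] [Module A Q]
    [AddCommGroup M] [Module A M] [Module S M] [SMulCommClass A S M] : Type :=
  (Q →ₗ[A] M) ⧸ homTrace A P S T Q M

variable {A P}

lemma mem_homTrace {S : Type} [Ring S] {T : Set Λ} {Q M : Type} [AddCommGroup Q] [Module A Q]
    [AddCommGroup M] [Module A M] [Module S M] [SMulCommClass A S M] {f : Q →ₗ[A] M} :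
    f ∈ homTrace A P S T Q M ↔ ∀ x, f x ∈ stdTrace A P T M := Iff.rfl

lemma finite_and_projective_hom {S : Type} [Ring S] {Q M : Type} [AddCommGroup Q] [Module A Q]
    [Module.Finite A Q] [Module.Projective A Q] [AddCommGroup M] [Module A M] [Module S M]
    [SMulCommClass A S M] [Module.Finite S M] [Module.Projective S M] :
    Module.Finite S (Q →ₗ[A] M) ∧ Module.Projective S (Q →ₗ[A] M) := by
  obtain ⟨n, k, q, hkq⟩ := exists_dual_basis (A := A) Q
  let a : (Q →ₗ[A] M) →ₗ[S] (Fin n → M) :=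
    { toFun f i := f (q i), map_add' _ _ := rfl, map_smul' _ _ := rfl }
  let b : (Fin n → M) →ₗ[S] (Q →ₗ[A] M) :=
    { toFun v := ∑ i, (k i).smulRight (v i)
      map_add' v w := by
        rw [← Finset.sum_add_distrib]
        refine Finset.sum_congr rfl fun i _ => ?_
        ext; simp
      map_smul' s v := by
        rw [RingHom.id_apply, Finset.smul_sum]
        refine Finset.sum_congr rfl fun i _ => ?_
        ext x
        simp [smul_comm] }
  have hpi : Module.Projective S (Fin n → M) :=
    .of_equiv (DFinsupp.linearEquivFunOnFintype (R := S) (M := fun _ : Fin n => M))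
  have hab : b ∘ₗ a = LinearMap.id := by
    refine LinearMap.ext fun f => LinearMap.ext fun x => ?_
    conv_rhs => rw [LinearMap.id_apply, ← hkq x, map_sum]
    simp [a, b]
  exact ⟨Module.Finite.of_surjective b fun f => ⟨a f, LinearMap.congr_fun hab f⟩,
    Module.Projective.of_split a b hab⟩

end HomTrace

section Functor

variable {R : Type} [CommRing R] {A : Type} [Ring A] [Algebra R A] {Λ : Type}
  {P : Λ → Type} [∀ l, AddCommGroup (P l)] [∀ l, Module A (P l)]
  {T : Set Λ} {Q M M' X : Type} [AddCommGroup Q] [Module A Q]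
  [AddCommGroup M] [Module R M] [Module A M] [IsScalarTower R A M]
  [AddCommGroup M'] [Module R M'] [Module A M'] [IsScalarTower R A M']
  [AddCommGroup X] [Module R X] [Module A X] [IsScalarTower R A X]

variable (R Q) in
/-- Postcomposition as an `R`-linear map. -/
def postcomp (g : M →ₗ[A] M') : (Q →ₗ[A] M) →ₗ[R] (Q →ₗ[A] M') where
  toFun f := g ∘ₗ f
  map_add' _ _ := LinearMap.comp_add _ _ _
  map_smul' r f := by
    ext x
    exact g.map_smul_of_tower r (f x)

variable (R P T Q) in
/-- Functoriality of `HomQuot` in the target. -/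
def HomQuot.map (g : M →ₗ[A] M') : HomQuot A P R T Q M →ₗ[R] HomQuot A P R T Q M' :=
  Submodule.mapQ _ _ (postcomp R Q g) fun _ hf x => map_mem_trace g (hf x)

@[simp] lemma HomQuot.map_mk (g : M →ₗ[A] M') (f : Q →ₗ[A] M) :
    HomQuot.map R P T Q g (Submodule.Quotient.mk f) = Submodule.Quotient.mk (g ∘ₗ f) := rfl

lemma HomQuot.map_retract {a : M →ₗ[A] M'} {b : M' →ₗ[A] M} (hab : ∀ x, b (a x) = x) :
    HomQuot.map R P T Q b ∘ₗ HomQuot.map R P T Q a = LinearMap.id := by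
  ext f
  have : b ∘ₗ a ∘ₗ f = f := LinearMap.ext fun x => hab (f x)
  simp [this]

lemma HomQuot.map_surjective [Module.Projective A Q] {π : M →ₗ[A] X}
    (hπ : Function.Surjective π) : Function.Surjective (HomQuot.map R P T Q π) := by
  intro y
  obtain ⟨f, rfl⟩ := Submodule.Quotient.mk_surjective _ y
  obtain ⟨g, hg⟩ := Module.projective_lifting_property π f hπ
  exact ⟨Submodule.Quotient.mk g, by simp [hg]⟩

lemma HomQuot.map_exact [Module.Projective A Q] [∀ l, Module.Projective A (P l)]
    {ι : M' →ₗ[A] M} {π : M →ₗ[A] X} (hι : Function.Injective ι) (hex : Function.Exact ι π)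
    (hπ : Function.Surjective π) :
    Function.Exact (HomQuot.map R P T Q ι) (HomQuot.map R P T Q π) := by
  intro y
  obtain ⟨f, rfl⟩ := Submodule.Quotient.mk_surjective _ y
  constructor
  · intro h0
    rw [HomQuot.map_mk, Submodule.Quotient.mk_eq_zero, mem_homTrace] at h0
    let t : stdTrace A P T M →ₗ[A] stdTrace A P T X :=
      π.restrict fun x hx => map_mem_trace π hx
    have ht : Function.Surjective t := fun ⟨y, hy⟩ => by
      obtain ⟨x, hx, rfl⟩ := exists_mem_trace_of_surjective π hπ hy
      exact ⟨⟨x, hx⟩, rfl⟩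
    obtain ⟨g, hg⟩ := Module.projective_lifting_property t ((π ∘ₗ f).codRestrict _ h0) ht
    have hg' : ∀ q, π (g q) = π (f q) := fun q => congrArg Subtype.val (LinearMap.congr_fun hg q)
    obtain ⟨f', hf'⟩ := exists_factor_of_exact hι hex (f - Submodule.subtype _ ∘ₗ g)
      (fun q => by simp [hg'])
    refine ⟨Submodule.Quotient.mk f', ?_⟩
    rw [HomQuot.map_mk, Submodule.Quotient.eq, mem_homTrace]
    intro x
    have : (ι ∘ₗ f' - f) x = - (g x : M) := by simp [hf']
    rw [this]
    exact neg_mem (g x).2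
  · rintro ⟨z, hz⟩
    obtain ⟨f', rfl⟩ := Submodule.Quotient.mk_surjective _ z
    rw [← hz, HomQuot.map_mk, HomQuot.map_mk, ← LinearMap.comp_assoc, hex.linearMap_comp_eq_zero,
      LinearMap.zero_comp, Submodule.Quotient.mk_zero]

omit [Module R X] [IsScalarTower R A X] in
lemma HomQuot.map_injective {ι : M' →ₗ[A] M} {π : M →ₗ[A] X} (hX : TracePure A P T X)
    (hι : Function.Injective ι) (hex : Function.Exact ι π)
    (hπ : Function.Surjective π) : Function.Injective (HomQuot.map R P T Q ι) := by
  rw [injective_iff_map_eq_zero]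
  intro y hy
  obtain ⟨f, rfl⟩ := Submodule.Quotient.mk_surjective _ y
  rw [HomQuot.map_mk, Submodule.Quotient.mk_eq_zero] at hy
  rw [Submodule.Quotient.mk_eq_zero]
  exact fun x => hX M' M ι π hι hex hπ _ (hy x)

end Functor

section Theta

variable {R : Type} [CommRing R] {A : Type} [Ring A] [Algebra R A] {Λ : Type}
  {P : Λ → Type} [∀ l, AddCommGroup (P l)] [∀ l, Module A (P l)]
  {T T' : Set Λ} {Q N : Type} [AddCommGroup Q] [Module A Q]
  [AddCommGroup N] [Module R N] [Module A N] [IsScalarTower R A N]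
  {U : Type} [AddCommGroup U] [Module R U]

/-- The map `[f] ⊗ u ↦ [f ∘ s(u)]`. -/
def HomQuot.theta (S : Type) [Ring S] [Algebra R S] (hT : T ⊆ T')
    (s : U →ₗ[R] (Q →ₗ[A] N)) (M : Type) [AddCommGroup M] [Module R M] [Module A M]
    [IsScalarTower R A M] [Module S M] [IsScalarTower R S M] [SMulCommClass A S M] :
    (HomQuot A P S T N M) ⊗[R] U →ₗ[S] HomQuot A P S T' Q M :=
  TensorProduct.AlgebraTensorModule.lift <| Submodule.liftQ _
    { toFun f :=
        { toFun u := Submodule.Quotient.mk (f ∘ₗ s u)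
          map_add' u v := by
            rw [map_add, LinearMap.comp_add]; rfl
          map_smul' r u := by
            rw [map_smul, RingHom.id_apply, ← Submodule.Quotient.mk_smul]
            congr 1
            ext x
            exact f.map_smul_of_tower r (s u x) }
      map_add' f g := by
        ext u
        exact congrArg Submodule.Quotient.mk (LinearMap.add_comp _ _ _)
      map_smul' a f := by
        ext u
        rfl } (fun f hf => LinearMap.ext fun u => by
          exact (Submodule.Quotient.mk_eq_zero _).2 fun x => trace_mono hT (hf _))

@[simp] lemma HomQuot.theta_mk_tmul (S : Type) [Ring S] [Algebra R S] (hT : T ⊆ T')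
    (s : U →ₗ[R] (Q →ₗ[A] N)) (M : Type) [AddCommGroup M] [Module R M] [Module A M]
    [IsScalarTower R A M] [Module S M] [IsScalarTower R S M] [SMulCommClass A S M]
    (f : N →ₗ[A] M) (u : U) :
    HomQuot.theta (P := P) S hT s M (Submodule.Quotient.mk f ⊗ₜ u) =
      Submodule.Quotient.mk (f ∘ₗ s u) := rfl

end Theta

section Gm

lemma finite_and_projective_of_exact {R X Y Z : Type} [CommRing R] [AddCommGroup X] [Module R X]
    [AddCommGroup Y] [Module R Y] [AddCommGroup Z] [Module R Z] {f : X →ₗ[R] Y} {g : Y →ₗ[R] Z}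
    (hf : Function.Injective f) (hfg : Function.Exact f g) (hg : Function.Surjective g)
    (hX : Module.Finite R X ∧ Module.Projective R X)
    (hZ : Module.Finite R Z ∧ Module.Projective R Z) :
    Module.Finite R Y ∧ Module.Projective R Y := by
  obtain ⟨_, _⟩ := hX
  obtain ⟨_, _⟩ := hZ
  obtain ⟨s, hs⟩ := Module.projective_lifting_property g LinearMap.id hg
  let e := (hfg.splitSurjectiveEquiv hf ⟨s, hs⟩).1
  exact ⟨Module.Finite.equiv e.symm, Module.Projective.of_equiv e.symm⟩

variable {R : Type} [CommRing R] {A : Type} [Ring A] [Algebra R A] {Λ : Type} [PartialOrder Λ]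
  {Δ : Λ → Type} [∀ l, AddCommGroup (Δ l)] [∀ l, Module R (Δ l)]
  [∀ l, Module A (Δ l)] [∀ l, IsScalarTower R A (Δ l)]
  {P : Λ → Type} [∀ l, AddCommGroup (P l)] [∀ l, Module R (P l)]
  [∀ l, Module A (P l)] [∀ l, IsScalarTower R A (P l)]
  {epi : ∀ l, P l →ₗ[A] Δ l} {S : Set Λ}
  {M : Type} [AddCommGroup M] [Module R M] [Module A M] [IsScalarTower R A M]

namespace StdCover

variable (hP : StdCover R epi)
include hP

lemma homQuot_subsingleton {m : Λ} (hm : m ∉ S) (h : StdClass R A Δ S M) :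
    Subsingleton (HomQuot A P R {μ | m < μ} (P m) M) := by
  have := hP.proj
  induction h with
  | zero M =>
    exact (Submodule.mkQ_surjective _).subsingleton
  | std l hl =>
    rw [Submodule.Quotient.subsingleton_iff, eq_top_iff]
    intro f _ x
    by_cases hf : f = 0
    · rw [hf]; exact zero_mem _
    · have hlt : m < l := lt_of_le_of_ne (hP.hom_le_of_ne_zero f hf) (by rintro rfl; exact hm hl)
      exact hP.mem_trace (Set.singleton_subset_iff.2 hlt) (.std l rfl) _
  | retract X Y a b hab _ ih =>
    exact Function.Surjective.subsingleton (f := HomQuot.map R P _ (P m) b) fun x =>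
      ⟨HomQuot.map R P _ (P m) a x, LinearMap.congr_fun (HomQuot.map_retract hab) x⟩
  | ext M K _ _ ih₁ ih₂ =>
    refine subsingleton_of_forall_eq 0 fun x => ?_
    obtain ⟨y, rfl⟩ := (HomQuot.map_exact (R := R) (P := P) (T := {μ | m < μ}) (Q := P m)
      K.subtype_injective (LinearMap.exact_subtype_mkQ K) K.mkQ_surjective x).1
      (Subsingleton.elim _ _)
    rw [Subsingleton.elim y 0, map_zero]

lemma trace_std_self (m : Λ) : stdTrace A P {μ | m < μ} (Δ m) = ⊥ :=
  hP.trace_std_eq_bot fun _ hμ => not_le_of_gt hμ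

/-- `[epi]` is a basis of the module of homomorphisms `P(m) → Δ(m)` modulo trace. -/
noncomputable def stdEquiv (m : Λ) : R ≃ₗ[R] HomQuot A P R {μ | m < μ} (P m) (Δ m) :=
  LinearEquiv.ofBijective (LinearMap.toSpanSingleton R _ (Submodule.Quotient.mk (epi m))) <| by
    constructor
    · rw [injective_iff_map_eq_zero]
      intro r hr
      rw [LinearMap.toSpanSingleton_apply, ← Submodule.Quotient.mk_smul,
        Submodule.Quotient.mk_eq_zero] at hr
      refine hP.faithful m r fun x => ?_
      obtain ⟨p, rfl⟩ := hP.surj m x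
      have := hr p
      rwa [hP.trace_std_self, Submodule.mem_bot] at this
    · intro y
      obtain ⟨f, rfl⟩ := Submodule.Quotient.mk_surjective _ y
      obtain ⟨r, hr⟩ := hP.exists_smul_epi f
      refine ⟨r, ?_⟩
      rw [LinearMap.toSpanSingleton_apply, ← Submodule.Quotient.mk_smul]
      congr 1
      exact LinearMap.ext fun x => (hr x).symm

lemma stdEquiv_apply (m : Λ) (r : R) :
    hP.stdEquiv m r = r • Submodule.Quotient.mk (epi m) := rfl

lemma homQuot_exact (m : Λ) (K : Submodule A M) (h : StdClass R A Δ S (M ⧸ K)) :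
    Function.Injective (HomQuot.map R P {μ | m < μ} (P m) K.subtype) ∧
    Function.Exact (HomQuot.map R P {μ | m < μ} (P m) K.subtype)
      (HomQuot.map R P {μ | m < μ} (P m) K.mkQ) ∧
    Function.Surjective (HomQuot.map R P {μ | m < μ} (P m) K.mkQ) := by
  have := hP.proj
  exact ⟨HomQuot.map_injective (hP.tracePure (fun a b hab ha => lt_of_lt_of_le ha hab) h)
    K.subtype_injective (LinearMap.exact_subtype_mkQ K) K.mkQ_surjective,
    HomQuot.map_exact K.subtype_injective (LinearMap.exact_subtype_mkQ K) K.mkQ_surjective,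
    HomQuot.map_surjective K.mkQ_surjective⟩

lemma homQuot_finite_and_projective (m : Λ) (h : StdClass R A Δ S M) :
    Module.Finite R (HomQuot A P R {μ | m < μ} (P m) M) ∧
      Module.Projective R (HomQuot A P R {μ | m < μ} (P m) M) := by
  induction h with
  | zero M =>
    have : Subsingleton (HomQuot A P R {μ | m < μ} (P m) M) :=
      (Submodule.mkQ_surjective _).subsingleton
    exact ⟨inferInstance, inferInstance⟩
  | std l hl =>
    by_cases hlm : l = m
    · subst hlm
      exact ⟨Module.Finite.equiv (hP.stdEquiv l), Module.Projective.of_equiv (hP.stdEquiv l)⟩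
    · have := hP.homQuot_subsingleton (S := {l}) (Ne.symm hlm) (.std l rfl)
      exact ⟨inferInstance, inferInstance⟩
  | retract X Y a b hab _ ih =>
    obtain ⟨_, _⟩ := ih
    have := HomQuot.map_retract (R := R) (P := P) (T := {μ | m < μ}) (Q := P m) hab
    exact ⟨Module.Finite.of_surjective (HomQuot.map R P _ (P m) b) fun x =>
      ⟨HomQuot.map R P _ (P m) a x, LinearMap.congr_fun this x⟩, Module.Projective.of_split _ _ this⟩
  | ext M K _ h₂ ih₁ ih₂ =>
    obtain ⟨h1, h2, h3⟩ := hP.homQuot_exact m K h₂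
    exact finite_and_projective_of_exact h1 h2 h3 ih₁ ih₂

lemma exists_section (m μ : Λ) [∀ l, Module.Finite R (Δ l)] [∀ l, Module.Projective R (Δ l)] :
    ∃ s : (P m →ₗ[A] Δ μ) →ₗ[R] (P m →ₗ[A] P μ), ∀ u x, epi μ (s u x) = u x := by
  have := hP.proj
  have := hP.fin
  have := (finite_and_projective_hom (S := R) (A := A) (Q := P m) (M := Δ μ)).2
  obtain ⟨s, hs⟩ := Module.projective_lifting_property (postcomp R (P m) (epi μ)) LinearMap.id
    fun f => Module.projective_lifting_property (epi μ) f (hP.surj μ)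
  exact ⟨s, fun u x => LinearMap.congr_fun (LinearMap.congr_fun hs u) x⟩

lemma theta_injective {m μ : Λ} {T : Set Λ} (hT : IsUpperSet T) (hμ : μ ∉ T)
    (hT' : {ν | μ < ν} ⊆ T) (s : (P m →ₗ[A] Δ μ) →ₗ[R] (P m →ₗ[A] P μ))
    (hs : ∀ u x, epi μ (s u x) = u x) (h : StdClass R A Δ S M) :
    Function.Injective (HomQuot.theta (A := A) (P := P) R hT' s M) := by
  have := hP.proj
  induction h with
  | zero M =>
    have : Subsingleton (HomQuot A P R {ν | μ < ν} (P μ) M) :=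
      (Submodule.mkQ_surjective _).subsingleton
    exact Function.injective_of_subsingleton _
  | std l hl =>
    by_cases hlm : l = μ
    · subst hlm
      have key : ∀ z : HomQuot A P R {ν | l < ν} (P l) (Δ l) ⊗[R] (P m →ₗ[A] Δ l),
          ∃ u, z = Submodule.Quotient.mk (epi l) ⊗ₜ u := by
        intro z
        induction z with
        | zero => exact ⟨0, (TensorProduct.tmul_zero _ _).symm⟩
        | add x y hx hy =>
          obtain ⟨u, rfl⟩ := hx
          obtain ⟨v, rfl⟩ := hy
          exact ⟨u + v, (TensorProduct.tmul_add _ _ _).symm⟩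
        | tmul x u =>
          obtain ⟨r, rfl⟩ := (hP.stdEquiv l).surjective x
          exact ⟨r • u, by rw [stdEquiv_apply, TensorProduct.smul_tmul]⟩
      rw [injective_iff_map_eq_zero]
      intro z hz
      obtain ⟨u, rfl⟩ := key z
      rw [HomQuot.theta_mk_tmul, Submodule.Quotient.mk_eq_zero] at hz
      have : u = 0 := by
        ext x
        have h1 := hz x
        rwa [hP.trace_std_eq_bot (fun ν hν hνl => hμ (hT hνl hν)), Submodule.mem_bot,
          LinearMap.comp_apply, hs] at h1
      rw [this, TensorProduct.tmul_zero]
    · have := hP.homQuot_subsingleton (S := {l}) (Ne.symm hlm) (.std l rfl)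
      exact Function.injective_of_subsingleton _
  | retract X Y a b hab _ ih =>
    have hnat : HomQuot.map R P T (P m) a ∘ₗ HomQuot.theta R hT' s X =
        HomQuot.theta R hT' s Y ∘ₗ (HomQuot.map R P {ν | μ < ν} (P μ) a).rTensor _ :=
      TensorProduct.ext (by ext; rfl)
    have h1 : (HomQuot.map R P {ν | μ < ν} (P μ) b).rTensor (P m →ₗ[A] Δ μ) ∘ₗ
        (HomQuot.map R P {ν | μ < ν} (P μ) a).rTensor (P m →ₗ[A] Δ μ) = LinearMap.id := by
      rw [← LinearMap.rTensor_comp, HomQuot.map_retract hab, LinearMap.rTensor_id]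
    rw [injective_iff_map_eq_zero]
    intro z hz
    have h2 := LinearMap.congr_fun hnat z
    rw [LinearMap.comp_apply, LinearMap.comp_apply, hz, map_zero] at h2
    have h3 := (injective_iff_map_eq_zero _).1 ih _ h2.symm
    rw [← LinearMap.id_apply (R := R) z, ← h1, LinearMap.comp_apply, h3, map_zero]
  | ext M K _ h₂ ih₁ ih₂ =>
    have hnat₁ : HomQuot.map R P T (P m) K.subtype ∘ₗ HomQuot.theta R hT' s K =
        HomQuot.theta R hT' s M ∘ₗ (HomQuot.map R P {ν | μ < ν} (P μ) K.subtype).rTensor _ :=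
      TensorProduct.ext (by ext; rfl)
    have hnat₂ : HomQuot.map R P T (P m) K.mkQ ∘ₗ HomQuot.theta R hT' s M =
        HomQuot.theta R hT' s (M ⧸ K) ∘ₗ (HomQuot.map R P {ν | μ < ν} (P μ) K.mkQ).rTensor _ :=
      TensorProduct.ext (by ext; rfl)
    obtain ⟨-, h4, h5⟩ := hP.homQuot_exact μ K h₂
    rw [injective_iff_map_eq_zero]
    intro z hz
    have h2 := LinearMap.congr_fun hnat₂ z
    rw [LinearMap.comp_apply, LinearMap.comp_apply, hz, map_zero] at h2
    have h3 := (injective_iff_map_eq_zero _).1 ih₂ _ h2.symm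
    obtain ⟨w, rfl⟩ := (rTensor_exact (P m →ₗ[A] Δ μ) h4 h5 z).1 h3
    have h6 := LinearMap.congr_fun hnat₁ w
    rw [LinearMap.comp_apply, LinearMap.comp_apply, hz] at h6
    have h7 : HomQuot.theta R hT' s K w = 0 :=
      (injective_iff_map_eq_zero _).1 (HomQuot.map_injective (hP.tracePure hT h₂)
        K.subtype_injective (LinearMap.exact_subtype_mkQ K) K.mkQ_surjective) _ h6
    rw [(injective_iff_map_eq_zero _).1 ih₁ _ h7, map_zero]

end StdCover

end Gm

section Op

/-- The identity `A ≃ Aᵐᵒᵖ` as right modules. -/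
def opRegularEquiv (A : Type) [Ring A] : A ≃ₗ[Aᵐᵒᵖ] Aᵐᵒᵖ :=
  { MulOpposite.opAddEquiv with map_smul' := fun _ _ => rfl }

lemma finite_and_projective_regular_op (A : Type) [Ring A] :
    Module.Finite Aᵐᵒᵖ A ∧ Module.Projective Aᵐᵒᵖ A :=
  ⟨Module.Finite.equiv (opRegularEquiv A).symm, Module.Projective.of_equiv (opRegularEquiv A).symm⟩

/-- A map between duals of finitely generated projective modules is a dual map. -/
lemma exists_eq_comp_of_dual {A Q Q' : Type} [Ring A] [AddCommGroup Q] [Module A Q]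
    [Module.Finite A Q] [Module.Projective A Q] [AddCommGroup Q'] [Module A Q']
    (Φ : (Q →ₗ[A] A) →ₗ[Aᵐᵒᵖ] (Q' →ₗ[A] A)) : ∃ g : Q' →ₗ[A] Q, ∀ f, Φ f = f ∘ₗ g := by
  obtain ⟨n, k, q, hkq⟩ := exists_dual_basis (A := A) Q
  refine ⟨∑ i, (Φ (k i)).smulRight (q i), fun f => ?_⟩
  have hf : f = ∑ i, MulOpposite.op (f (q i)) • k i := by
    ext x
    conv_lhs => rw [← hkq x, map_sum]
    simp
  ext y
  conv_lhs => rw [hf, map_sum]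
  simp

/-- If `W₁ / W₀` is the image of an injective map, then it is isomorphic to its source. -/
noncomputable def factorEquiv {B V X : Type} [Ring B] [AddCommGroup V] [Module B V]
    [AddCommGroup X] [Module B X] (K W₀ W₁ : Submodule B V) (hK : W₁ ≤ K) (g : X →ₗ[B] V ⧸ W₀)
    (hg : Function.Injective g) (hr : LinearMap.range g = W₁.map W₀.mkQ) :
    (↥(Submodule.comap K.subtype W₁) ⧸ (Submodule.comap (Submodule.comap K.subtype W₁).subtype
      (Submodule.comap K.subtype W₀))) ≃ₗ[B] X :=
  let f : Submodule.comap K.subtype W₁ →ₗ[B] V ⧸ W₀ :=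
    W₀.mkQ ∘ₗ K.subtype ∘ₗ (Submodule.comap K.subtype W₁).subtype
  have hk : LinearMap.ker f = Submodule.comap (Submodule.comap K.subtype W₁).subtype
      (Submodule.comap K.subtype W₀) := by
    rw [LinearMap.ker_comp, Submodule.ker_mkQ]; rfl
  have hrange : LinearMap.range f = LinearMap.range g := by
    rw [hr, LinearMap.range_comp, LinearMap.range_comp, Submodule.range_subtype,
      Submodule.map_comap_subtype, inf_eq_right.2 hK]
  Submodule.quotEquivOfEq _ _ hk.symm ≪≫ₗ f.quotKerEquivRange ≪≫ₗ LinearEquiv.ofEq _ _ hrange ≪≫ₗ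
    (LinearEquiv.ofInjective g hg).symm

lemma exists_equiv_fin_of_lt (α : Type) [Fintype α] [PartialOrder α] :
    ∃ (k : ℕ) (e : Fin k ≃ α), ∀ i j, e i < e j → i < j := by
  obtain ⟨f, hf, hf'⟩ : ∃ f : α → LinearExtension α, Function.Bijective f ∧ Monotone f :=
    ⟨toLinearExtension, Function.bijective_id, toLinearExtension.monotone⟩
  have : Fintype (LinearExtension α) := Fintype.ofBijective f hf
  let e := monoEquivOfFin (LinearExtension α) rfl
  refine ⟨_, e.toEquiv.trans (Equiv.ofBijective f hf).symm, fun i j hij => ?_⟩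
  refine lt_of_le_of_ne (e.le_iff_le.1 ?_) (by rintro rfl; exact lt_irrefl _ hij)
  have h := hf' (le_of_lt hij)
  have h1 : ∀ x, f ((e.toEquiv.trans (Equiv.ofBijective f hf).symm) x) = e x := fun x =>
    (Equiv.ofBijective f hf).apply_symm_apply (e x)
  rwa [h1, h1] at h

/-- An enumeration of the elements above `m` refining the opposite of the order. -/
lemma exists_enum_Ioi {Λ : Type} [Fintype Λ] [PartialOrder Λ] (m : Λ) :
    ∃ (k : ℕ) (e : Fin k → Λ), Function.Injective e ∧ Set.range e = {μ | m < μ} ∧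
      ∀ i j, e i < e j → j < i := by
  classical
  obtain ⟨k, e, he⟩ := exists_equiv_fin_of_lt {μ : Λ // m < μ}ᵒᵈ
  refine ⟨k, fun i => (OrderDual.ofDual (e i)).1, ?_, ?_, fun i j hij => he j i hij⟩
  · exact Subtype.val_injective.comp (OrderDual.ofDual.injective.comp e.injective)
  · ext μ
    constructor
    · rintro ⟨i, rfl⟩
      exact (OrderDual.ofDual (e i)).2
    · intro h
      exact ⟨e.symm (OrderDual.toDual ⟨μ, h⟩), by simp⟩

variable {R : Type} [CommRing R] {A : Type} [Ring A] [Algebra R A] {Λ : Type} [PartialOrder Λ]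
  {Δ : Λ → Type} [∀ l, AddCommGroup (Δ l)] [∀ l, Module R (Δ l)]
  [∀ l, Module A (Δ l)] [∀ l, IsScalarTower R A (Δ l)]
  {P : Λ → Type} [∀ l, AddCommGroup (P l)] [∀ l, Module R (P l)]
  [∀ l, Module A (P l)] [∀ l, IsScalarTower R A (P l)]
  {epi : ∀ l, P l →ₗ[A] Δ l} {S : Set Λ}

variable (R) in
/-- The quotient `HomQuot` of `Hom(Q, A)` does not depend on the ring of scalars. -/
noncomputable def homQuotOpEquiv (T : Set Λ) (Q : Type) [AddCommGroup Q] [Module A Q] :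
    HomQuot A P R T Q A ≃ₗ[R] HomQuot A P Aᵐᵒᵖ T Q A :=
  Submodule.Quotient.restrictScalarsEquiv R (homTrace A P Aᵐᵒᵖ T Q A)

namespace StdCover

variable (hP : StdCover R epi)
include hP

lemma stdClass_cover (l : Λ) : StdClass R A Δ {μ | l ≤ μ} (P l) :=
  .of_surjective (epi l) (hP.surj l) ((hP.ker l).mono fun _ h => le_of_lt h) (.std l le_rfl)

lemma theta_op_injective {m μ : Λ} {T : Set Λ} (hT : IsUpperSet T) (hμ : μ ∉ T)
    (hT' : {ν | μ < ν} ⊆ T) (s : (P m →ₗ[A] Δ μ) →ₗ[R] (P m →ₗ[A] P μ))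
    (hs : ∀ u x, epi μ (s u x) = u x) :
    Function.Injective (HomQuot.theta (A := A) (P := P) Aᵐᵒᵖ hT' s A) := by
  have h1 := hP.theta_injective hT hμ hT' s hs hP.reg
  have h2 : (HomQuot.theta (A := A) (P := P) Aᵐᵒᵖ hT' s A).restrictScalars R ∘ₗ
      (LinearEquiv.rTensor (P m →ₗ[A] Δ μ) (homQuotOpEquiv R _ (P μ))).toLinearMap =
      (homQuotOpEquiv R T (P m)).toLinearMap ∘ₗ HomQuot.theta R hT' s A :=
    TensorProduct.ext (by ext; rfl)
  have h3 : Function.Injective ((HomQuot.theta (A := A) (P := P) Aᵐᵒᵖ hT' s A) ∘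
      (LinearEquiv.rTensor (P m →ₗ[A] Δ μ) (homQuotOpEquiv R _ (P μ)))) := by
    intro x y hxy
    refine h1 ((homQuotOpEquiv R T (P m)).injective ?_)
    exact (LinearMap.congr_fun h2 x).symm.trans (hxy.trans (LinearMap.congr_fun h2 y))
  intro x y hxy
  obtain ⟨x, rfl⟩ := (LinearEquiv.rTensor (P m →ₗ[A] Δ μ)
    (homQuotOpEquiv R {ν | μ < ν} (P μ))).surjective x
  obtain ⟨y, rfl⟩ := (LinearEquiv.rTensor (P m →ₗ[A] Δ μ)
    (homQuotOpEquiv R {ν | μ < ν} (P μ))).surjective y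
  rw [h3 hxy]

lemma range_theta_op {m μ : Λ} {T : Set Λ}
    (hT' : {ν | μ < ν} ⊆ T) (s : (P m →ₗ[A] Δ μ) →ₗ[R] (P m →ₗ[A] P μ))
    (hs : ∀ u x, epi μ (s u x) = u x) :
    LinearMap.range (HomQuot.theta (A := A) (P := P) Aᵐᵒᵖ hT' s A) =
      (homTrace A P Aᵐᵒᵖ (insert μ T) (P m) A).map (homTrace A P Aᵐᵒᵖ T (P m) A).mkQ := by
  have := hP.proj
  have := hP.fin
  apply le_antisymm
  · rintro _ ⟨z, rfl⟩
    induction z with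
    | zero => rw [map_zero]; exact zero_mem _
    | add x y hx hy => rw [map_add]; exact add_mem hx hy
    | tmul x u =>
      obtain ⟨f, rfl⟩ := Submodule.Quotient.mk_surjective _ x
      exact ⟨f ∘ₗ s u, fun x => mem_trace_of_hom (Set.mem_insert _ _) f (s u x), rfl⟩
  · rintro _ ⟨g, hg, rfl⟩
    have hg' := mem_closure_of_range_le_trace g hg
    clear hg
    induction hg' using AddSubmonoid.closure_induction with
    | zero => rw [map_zero]; exact zero_mem _
    | add x y _ _ hx hy => rw [map_add]; exact add_mem hx hy
    | mem g hg =>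
      obtain ⟨ν, hν, F, h, rfl⟩ := hg
      obtain rfl | hν := hν
      · refine ⟨Submodule.Quotient.mk F ⊗ₜ (epi ν ∘ₗ h), ?_⟩
        rw [HomQuot.theta_mk_tmul, Submodule.mkQ_apply, Submodule.Quotient.eq, ← LinearMap.comp_sub]
        intro x
        have h1 : s (epi ν ∘ₗ h) x - h x ∈ LinearMap.ker (epi ν) := by
          rw [LinearMap.mem_ker, map_sub, hs, LinearMap.comp_apply, sub_self]
        exact map_mem_trace (F ∘ₗ (LinearMap.ker (epi ν)).subtype)
          (hP.mem_trace hT' (hP.ker ν) ⟨_, h1⟩)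
      · rw [Submodule.mkQ_apply, (Submodule.Quotient.mk_eq_zero _).2]
        · exact zero_mem _
        · exact fun x => mem_trace_of_hom hν F (h x)

lemma exists_lift_op {l m : Λ} (φ : HomQuot A P Aᵐᵒᵖ {μ | l < μ} (P l) A →ₗ[Aᵐᵒᵖ]
    HomQuot A P Aᵐᵒᵖ {μ | m < μ} (P m) A) : ∃ g : P m →ₗ[A] P l,
      ∀ f, φ (Submodule.Quotient.mk f) = Submodule.Quotient.mk (f ∘ₗ g) := by
  have := hP.proj
  have := hP.fin
  obtain ⟨_, _⟩ := finite_and_projective_regular_op A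
  have := (finite_and_projective_hom (S := Aᵐᵒᵖ) (A := A) (Q := P l) (M := A)).2
  obtain ⟨Φ, hΦ⟩ := Module.projective_lifting_property
    (homTrace A P Aᵐᵒᵖ {μ | m < μ} (P m) A).mkQ (φ ∘ₗ Submodule.mkQ _) (Submodule.mkQ_surjective _)
  obtain ⟨g, hg⟩ := exists_eq_comp_of_dual Φ
  refine ⟨g, fun f => ?_⟩
  rw [← hg]
  exact (LinearMap.congr_fun hΦ f).symm

lemma hom_le_op {l m : Λ} (φ : HomQuot A P Aᵐᵒᵖ {μ | l < μ} (P l) A →ₗ[Aᵐᵒᵖ]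
    HomQuot A P Aᵐᵒᵖ {μ | m < μ} (P m) A) (hφ : φ ≠ 0) : l ≤ m := by
  by_contra hlm
  obtain ⟨g, hg⟩ := hP.exists_lift_op φ
  refine hφ (LinearMap.ext fun x => ?_)
  obtain ⟨f, rfl⟩ := Submodule.Quotient.mk_surjective _ x
  have h1 := hP.homQuot_subsingleton (m := m) hlm (hP.stdClass_cover l)
  rw [Submodule.Quotient.subsingleton_iff] at h1
  have h2 : g ∈ homTrace A P R {μ | m < μ} (P m) (P l) := h1 ▸ Submodule.mem_top
  rw [hg, LinearMap.zero_apply, Submodule.Quotient.mk_eq_zero]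
  exact fun x => map_mem_trace f (h2 x)

lemma endo_op {m : Λ} (φ : HomQuot A P Aᵐᵒᵖ {μ | m < μ} (P m) A →ₗ[Aᵐᵒᵖ]
    HomQuot A P Aᵐᵒᵖ {μ | m < μ} (P m) A) : ∃ r : R, ∀ x, φ x = r • x := by
  obtain ⟨g, hg⟩ := hP.exists_lift_op φ
  obtain ⟨r, hr⟩ := hP.exists_smul_epi (epi m ∘ₗ g)
  refine ⟨r, fun x => ?_⟩
  obtain ⟨f, rfl⟩ := Submodule.Quotient.mk_surjective _ x
  rw [hg, ← Submodule.Quotient.mk_smul, Submodule.Quotient.eq]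
  intro x
  have h1 : g x - r • x ∈ LinearMap.ker (epi m) := by
    rw [LinearMap.mem_ker, map_sub, LinearMap.map_smul_of_tower, ← hr, LinearMap.comp_apply,
      sub_self]
  have h2 : (f ∘ₗ g - r • f) x = f (g x - r • x) := by
    rw [map_sub, LinearMap.map_smul_of_tower]; rfl
  rw [h2]
  exact map_mem_trace (f ∘ₗ (LinearMap.ker (epi m)).subtype)
    (hP.mem_trace le_rfl (hP.ker m) ⟨_, h1⟩)

lemma faithful_op (m : Λ) (r : R)
    (h : ∀ x : HomQuot A P Aᵐᵒᵖ {μ | m < μ} (P m) A, r • x = 0) : r = 0 := by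
  have := hP.proj
  have := hP.fin
  obtain ⟨n, k, q, hkq⟩ := exists_dual_basis (A := A) (P m)
  refine hP.faithful m r fun x => ?_
  obtain ⟨y, rfl⟩ := hP.surj m x
  have h1 : r • y ∈ stdTrace A P {μ | m < μ} (P m) := by
    rw [← hkq y, Finset.smul_sum]
    refine sum_mem fun i _ => ?_
    have h2 := h (Submodule.Quotient.mk (k i))
    rw [← Submodule.Quotient.mk_smul, Submodule.Quotient.mk_eq_zero] at h2
    rw [← smul_assoc]
    exact map_mem_trace (LinearMap.toSpanSingleton A (P m) (q i)) (h2 y)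
  have h3 := map_mem_trace (epi m) h1
  rwa [hP.trace_std_self, Submodule.mem_bot, LinearMap.map_smul_of_tower] at h3

variable (P) in
lemma inFilt_op [IsNoetherianRing R] [Module.Finite R A] [Fintype Λ] [∀ l, Module.Finite R (Δ l)]
    [∀ l, Module.Projective R (Δ l)] (m : Λ) :
    InFilt R Aᵐᵒᵖ Λ (fun l => HomQuot A P Aᵐᵒᵖ {μ | l < μ} (P l) A) {μ | m < μ}
      (LinearMap.ker (homTrace A P Aᵐᵒᵖ {μ | m < μ} (P m) A).mkQ) := by
  have := hP.proj
  have := hP.fin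
  rw [Submodule.ker_mkQ]
  obtain ⟨_, _⟩ := finite_and_projective_regular_op A
  obtain ⟨_, _⟩ := finite_and_projective_hom (S := Aᵐᵒᵖ) (A := A) (Q := P m) (M := A)
  constructor
  · have : Module.Finite R Aᵐᵒᵖ := Module.Finite.equiv (MulOpposite.opLinearEquiv R)
    have : Module.Finite R (P m →ₗ[A] A) := Module.Finite.trans Aᵐᵒᵖ _
    have : IsNoetherian R (P m →ₗ[A] A) := isNoetherian_of_isNoetherianRing_of_finite R _
    have : IsNoetherian Aᵐᵒᵖ (P m →ₗ[A] A) := isNoetherian_of_tower R this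
    infer_instance
  obtain ⟨k, e, he, hr, hlt⟩ := exists_enum_Ioi m
  let T : Fin (k + 1) → Set Λ := fun i => {μ | ∃ j : Fin k, j.val < i.val ∧ e j = μ}
  have hm : ∀ i, m < e i := fun i => hr.subset ⟨i, rfl⟩
  have hTm : ∀ i, T i ⊆ {μ | m < μ} := by
    rintro i _ ⟨j, -, rfl⟩
    exact hm j
  have hmono : Monotone T := by
    rintro i i' h _ ⟨j, hj, rfl⟩
    exact ⟨j, lt_of_lt_of_le hj h, rfl⟩
  have hmono' : ∀ {T T' : Set Λ}, T ⊆ T' →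
      homTrace A P Aᵐᵒᵖ T (P m) A ≤ homTrace A P Aᵐᵒᵖ T' (P m) A :=
    fun h f hf x => trace_mono h (hf x)
  let W : Fin (k + 1) → Submodule Aᵐᵒᵖ (P m →ₗ[A] A) := fun i => homTrace A P Aᵐᵒᵖ (T i) (P m) A
  refine ⟨k, fun i => Submodule.comap (Submodule.subtype _) (W i), ?_, ?_, ?_, fun i => ?_⟩
  · rw [Submodule.eq_bot_iff]
    rintro ⟨f, hf⟩ h0
    have h1 : f = 0 := by
      ext x
      have h2 := h0 x
      rw [trace_eq_bot (by rintro μ ⟨j, hj, -⟩; exact absurd hj (Nat.not_lt_zero _))] at h2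
      exact h2
    exact Subtype.ext h1
  · rw [eq_top_iff]
    rintro ⟨f, hf⟩ -
    refine hmono' ?_ hf
    intro μ hμ
    obtain ⟨j, rfl⟩ := hr.superset hμ
    exact ⟨j, j.2, rfl⟩
  · intro i j hij
    exact Submodule.comap_mono (hmono' (hmono hij))
  · have hins : T i.succ = insert (e i) (T i.castSucc) := by
      ext μ
      constructor
      · rintro ⟨j, hj, rfl⟩
        rcases Nat.lt_succ_iff_lt_or_eq.1 hj with hj | hj
        · exact Or.inr ⟨j, hj, rfl⟩
        · exact Or.inl (congrArg e (Fin.ext hj))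
      · rintro (rfl | ⟨j, hj, rfl⟩)
        · exact ⟨i, Nat.lt_succ_self _, rfl⟩
        · exact ⟨j, Nat.lt_succ_of_lt hj, rfl⟩
    have hup : IsUpperSet (T i.castSucc) := by
      rintro μ ν hμν ⟨j, hj, rfl⟩
      obtain ⟨j', rfl⟩ := hr.superset (lt_of_lt_of_le (hm j) hμν)
      rcases hμν.lt_or_eq with h | h
      · exact ⟨j', lt_trans (hlt _ _ h) hj, rfl⟩
      · exact ⟨j, hj, h⟩
    have hnot : e i ∉ T i.castSucc := by
      rintro ⟨j, hj, h⟩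
      rw [he h] at hj
      exact lt_irrefl _ hj
    have hsub : {ν | e i < ν} ⊆ T i.castSucc := by
      intro ν hν
      obtain ⟨j, rfl⟩ := hr.superset ((hm i).trans hν)
      exact ⟨j, hlt _ _ hν, rfl⟩
    obtain ⟨s, hs⟩ := hP.exists_section m (e i)
    obtain ⟨h1, h2⟩ := finite_and_projective_hom (S := R) (A := A) (Q := P m) (M := Δ (e i))
    refine ⟨⟨e i, hm i, ModuleCat.of R (P m →ₗ[A] Δ (e i)), h1, h2, ?_⟩⟩
    refine factorEquiv _ _ _ (hmono' (hTm _)) (HomQuot.theta Aᵐᵒᵖ hsub s A)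
      (hP.theta_op_injective hup hnot hsub s hs) ?_
    rw [hP.range_theta_op hsub s hs, ← hins]

end StdCover

end Op

section Transport

variable {R : Type} [CommRing R] {A : Type} [Ring A] [Algebra R A] {Λ : Type}
  [PartialOrder Λ]
  {Δ Δ' : Λ → Type} [∀ l, AddCommGroup (Δ l)] [∀ l, Module R (Δ l)]
  [∀ l, Module A (Δ l)] [∀ l, IsScalarTower R A (Δ l)]
  [∀ l, AddCommGroup (Δ' l)] [∀ l, Module R (Δ' l)]
  [∀ l, Module A (Δ' l)] [∀ l, IsScalarTower R A (Δ' l)]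

omit [PartialOrder Λ] in
lemma InFilt.congr [Fintype Λ] (e : ∀ l, Δ l ≃ₗ[A] Δ' l) {S : Set Λ} {M : Type} [AddCommGroup M]
    [Module A M] (h : InFilt R A Λ Δ S M) : InFilt R A Λ Δ' S M := by
  obtain ⟨hf, n, c, h0, hn, hm, hc⟩ := h
  refine ⟨hf, n, c, h0, hn, hm, fun i => ?_⟩
  obtain ⟨⟨l, hl, U, hU, hU', f⟩⟩ := hc i
  exact ⟨⟨l, hl, U, hU, hU', f ≪≫ₗ TensorProduct.AlgebraTensorModule.congr (e l) (.refl R U)⟩⟩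

/-- A split quasi-hereditary structure only depends on the standard modules up to isomorphism. -/
noncomputable def SplitQH.congr [Fintype Λ] (h : SplitQH R A Λ Δ) (e : ∀ l, Δ l ≃ₗ[A] Δ' l) :
    SplitQH R A Λ Δ' where
  algFin := h.algFin
  algProj := h.algProj
  deltaFinA l := have := h.deltaFinA l; Module.Finite.equiv (e l)
  deltaFinR l := have := h.deltaFinR l; Module.Finite.equiv ((e l).restrictScalars R)
  deltaProjR l := have := h.deltaProjR l; Module.Projective.of_equiv ((e l).restrictScalars R)
  hom_le l m := by
    rintro ⟨f, hf⟩
    refine h.hom_le l m ⟨(e m).symm.toLinearMap ∘ₗ f ∘ₗ (e l).toLinearMap, fun h0 => hf ?_⟩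
    ext x
    have := LinearMap.congr_fun h0 ((e l).symm x)
    simpa using this
  endIso l := (h.endIso l).map fun f => ((e l).symm.conjAlgEquiv R).trans f
  P := h.P
  P_proj := h.P_proj
  P_fin := h.P_fin
  epi l := (e l).toLinearMap ∘ₗ h.epi l
  epi_surj l := (e l).surjective.comp (h.epi_surj l)
  ker_filt l := by
    rw [LinearEquiv.ker_comp]
    exact (h.ker_filt l).congr e
  add_gen := h.add_gen

end Transport

section Assemble

lemma InAdd.of_regular {B T : Type} [Ring B] [AddCommGroup T] [Module B T] (h : InAdd B T B)
    (Q : Type) [AddCommGroup Q] [Module B Q] [Module.Finite B Q] [Module.Projective B Q] :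
    InAdd B T Q := by
  obtain ⟨n, i, p, hpi⟩ := h
  obtain ⟨N, f, g, -, -, hfg⟩ := Module.Finite.exists_comp_eq_id_of_projective B Q
  let e : (Fin N → Fin n → T) ≃ₗ[B] (Fin (N * n) → T) :=
    (LinearEquiv.curry B T (Fin N) (Fin n)).symm ≪≫ₗ
      LinearEquiv.funCongrLeft B T finProdFinEquiv.symm
  refine ⟨N * n, e.toLinearMap ∘ₗ (LinearMap.pi fun j => i ∘ₗ LinearMap.proj j) ∘ₗ g,
    f ∘ₗ (LinearMap.pi fun j => p ∘ₗ LinearMap.proj j) ∘ₗ e.symm.toLinearMap, ?_⟩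
  rw [← hfg]
  ext x
  simp only [LinearMap.comp_apply, LinearEquiv.coe_coe, LinearEquiv.symm_apply_apply]
  congr 1
  ext j
  exact LinearMap.congr_fun hpi _

variable {A : Type} [Ring A] {Λ : Type} [Fintype Λ] {P : Λ → Type} [∀ l, AddCommGroup (P l)]
  [∀ l, Module A (P l)]

lemma InAdd.dual (h : InAdd A (∀ l, P l) A) : InAdd Aᵐᵒᵖ (∀ l, P l →ₗ[A] A) Aᵐᵒᵖ := by
  classical
  obtain ⟨n, i, p, hpi⟩ := h
  let v : Fin n → ∀ l, P l →ₗ[A] A := fun j l =>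
    p ∘ₗ LinearMap.single A (fun _ : Fin n => ∀ l, P l) j ∘ₗ LinearMap.single A P l
  let b : (Fin n → ∀ l, P l →ₗ[A] A) →ₗ[Aᵐᵒᵖ] Aᵐᵒᵖ :=
    { toFun w := MulOpposite.op (∑ j, ∑ l, w j l (i 1 j l))
      map_add' w w' := by
        simp [Finset.sum_add_distrib]
      map_smul' c w := by
        apply MulOpposite.unop_injective
        simp [Finset.sum_mul] }
  refine ⟨n, LinearMap.toSpanSingleton _ _ v, b, LinearMap.ext_ring ?_⟩
  apply MulOpposite.unop_injective
  have h1 : ∑ j, ∑ l, v j l (i 1 j l) = 1 := by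
    have h2 : ∀ j, ∑ l, v j l (i 1 j l) = p (Pi.single j (i 1 j)) := fun j => by
      conv_rhs => rw [← Finset.univ_sum_single (i 1 j)]
      rw [← LinearMap.single_apply (R := A), map_sum, map_sum]
      rfl
    simp_rw [h2]
    rw [← map_sum, Finset.univ_sum_single]
    exact LinearMap.congr_fun hpi 1
  simpa [b] using h1

variable {R : Type} [CommRing R] [Algebra R A] [PartialOrder Λ]
  {Δ : Λ → Type} [∀ l, AddCommGroup (Δ l)] [∀ l, Module R (Δ l)]
  [∀ l, Module A (Δ l)] [∀ l, IsScalarTower R A (Δ l)] [∀ l, Module R (P l)]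
  [∀ l, IsScalarTower R A (P l)]
  {epi : ∀ l, P l →ₗ[A] Δ l}

/-- The opposite algebra is split quasi-hereditary. -/
noncomputable def StdCover.splitQH_op [IsNoetherianRing R] [Module.Finite R A]
    [Module.Projective R A] [∀ l, Module.Finite R (Δ l)]
    [∀ l, Module.Projective R (Δ l)] (hP : StdCover R epi) (hA : InAdd A (∀ l, P l) A) :
    SplitQH R Aᵐᵒᵖ Λ (fun l => HomQuot A P Aᵐᵒᵖ {μ | l < μ} (P l) A) where
  algFin := Module.Finite.equiv (MulOpposite.opLinearEquiv R)
  algProj := Module.Projective.of_equiv (MulOpposite.opLinearEquiv R : A ≃ₗ[R] Aᵐᵒᵖ)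
  deltaFinA l := by
    have := (hP.homQuot_finite_and_projective l hP.reg).1
    have : Module.Finite R (HomQuot A P Aᵐᵒᵖ {μ | l < μ} (P l) A) :=
      Module.Finite.equiv (homQuotOpEquiv R _ _)
    exact Module.Finite.of_restrictScalars_finite R _ _
  deltaFinR l := by
    have := (hP.homQuot_finite_and_projective l hP.reg).1
    exact Module.Finite.equiv (homQuotOpEquiv R _ _)
  deltaProjR l := by
    have := (hP.homQuot_finite_and_projective l hP.reg).2
    exact Module.Projective.of_equiv (homQuotOpEquiv R _ _)
  hom_le l m := by
    rintro ⟨f, hf⟩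
    exact hP.hom_le_op f hf
  endIso l := by
    refine ⟨(AlgEquiv.ofBijective (Algebra.ofId R (Module.End Aᵐᵒᵖ
      (HomQuot A P Aᵐᵒᵖ {μ | l < μ} (P l) A))) ⟨?_, fun f => ?_⟩).symm⟩
    · rw [injective_iff_map_eq_zero]
      exact fun r hr => hP.faithful_op l r fun x => LinearMap.congr_fun hr x
    · obtain ⟨r, hr⟩ := hP.endo_op f
      exact ⟨r, LinearMap.ext fun x => (hr x).symm⟩
  P l := ModuleCat.of Aᵐᵒᵖ (P l →ₗ[A] A)
  P_proj l := by
    have := hP.proj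
    have := hP.fin
    obtain ⟨_, _⟩ := finite_and_projective_regular_op A
    exact (finite_and_projective_hom (S := Aᵐᵒᵖ) (A := A) (Q := P l) (M := A)).2
  P_fin l := by
    have := hP.proj
    have := hP.fin
    obtain ⟨_, _⟩ := finite_and_projective_regular_op A
    exact (finite_and_projective_hom (S := Aᵐᵒᵖ) (A := A) (Q := P l) (M := A)).1
  epi l := (homTrace A P Aᵐᵒᵖ {μ | l < μ} (P l) A).mkQ
  epi_surj l := Submodule.mkQ_surjective _
  ker_filt l := hP.inFilt_op P l
  add_gen Q _ _ := hA.dual.of_regular Q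

/-- Evaluation as an isomorphism of right modules from a finitely generated projective module to
its double dual. -/
noncomputable def evalEquivOp (E : Type) [AddCommGroup E] [Module R E] [Module Aᵐᵒᵖ E]
    [IsScalarTower R Aᵐᵒᵖ E] [Module.Finite R E] [Module.Projective R E] :
    E ≃ₗ[Aᵐᵒᵖ] ((E →ₗ[R] R) →ₗ[R] R) :=
  { Module.evalEquiv R E with
    map_smul' := fun _ _ => rfl }

lemma SplitQH.exists_stdCover (h : SplitQH R A Λ Δ) [∀ l, Module R (h.P l)]
    [∀ l, IsScalarTower R A (h.P l)] : StdCover R (P := fun l => h.P l) h.epi where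
  proj := h.P_proj
  fin := h.P_fin
  surj := h.epi_surj
  hom_le l m f hf := h.hom_le l m ⟨f, hf⟩
  endo l f := by
    obtain ⟨e⟩ := h.endIso l
    refine ⟨e f, fun x => ?_⟩
    have h1 : f = algebraMap R (Module.End A (Δ l)) (e f) := e.injective (by simp)
    conv_lhs => rw [h1]
    rfl
  faithful l r hr := by
    obtain ⟨e⟩ := h.endIso l
    have h1 : algebraMap R (Module.End A (Δ l)) r = 0 := LinearMap.ext hr
    simpa using congrArg e h1
  ker l := (h.ker_filt l).stdClass
  reg := by
    obtain ⟨n, i, p, hpi⟩ := h.add_gen (ModuleCat.of A A) inferInstance inferInstance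
    refine .retract A (Fin n → ∀ l, (h.P l : Type)) i p (LinearMap.congr_fun hpi)
      (.pi_fin n _ fun _ => .pi _ fun l => ?_)
    exact .of_surjective (h.epi l) (h.epi_surj l) ((h.ker_filt l).stdClass.mono
      (Set.subset_univ _)) (.std l (Set.mem_univ _))

end Assemble

lemma exists_comp_eq_of_ker_le {B X Y Z : Type} [Ring B] [AddCommGroup X] [Module B X]
    [AddCommGroup Y] [Module B Y] [AddCommGroup Z] [Module B Z] {f : X →ₗ[B] Z} {g : X →ₗ[B] Y}
    (hg : Function.Surjective g) (h : ∀ x ∈ LinearMap.ker g, f x = 0) :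
    ∃ f' : Y →ₗ[B] Z, f' ∘ₗ g = f := by
  refine ⟨(LinearMap.ker g).liftQ f h ∘ₗ (g.quotKerEquivOfSurjective hg).symm.toLinearMap, ?_⟩
  ext x
  have : (g.quotKerEquivOfSurjective hg) (Submodule.Quotient.mk x) = g x := rfl
  rw [LinearMap.comp_apply, LinearMap.comp_apply, LinearEquiv.coe_coe, ← this,
    LinearEquiv.symm_apply_apply]
  rfl

section Costandard

variable {R : Type} [CommRing R] {A : Type} [Ring A] [Algebra R A] {Λ : Type} [PartialOrder Λ]
  {Δ : Λ → Type} [∀ l, AddCommGroup (Δ l)] [∀ l, Module R (Δ l)]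
  [∀ l, Module A (Δ l)] [∀ l, IsScalarTower R A (Δ l)]
  {P : Λ → Type} [∀ l, AddCommGroup (P l)] [∀ l, Module R (P l)]
  [∀ l, Module A (P l)] [∀ l, IsScalarTower R A (P l)]
  {epi : ∀ l, P l →ₗ[A] Δ l} {S : Set Λ}
  {M M' : Type} [AddCommGroup M] [Module R M] [Module A M] [IsScalarTower R A M]
  [AddCommGroup M'] [Module R M'] [Module A M'] [IsScalarTower R A M']

variable (R A P) in
/-- The costandard modules. -/
abbrev Costd (m : Λ) : Type := HomQuot A P Aᵐᵒᵖ {μ | m < μ} (P m) A →ₗ[R] R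

/-- The map `M → ∇(m)` induced by a linear form on homomorphisms `P(m) → M` modulo trace. -/
noncomputable def Costd.lift {m : Λ} (α : HomQuot A P R {μ | m < μ} (P m) M →ₗ[R] R) :
    M →ₗ[A] Costd R A P m where
  toFun x := α ∘ₗ HomQuot.map R P _ (P m) (LinearMap.toSpanSingleton A M x) ∘ₗ
    (homQuotOpEquiv R _ (P m)).symm.toLinearMap
  map_add' x y := by
    refine LinearMap.ext fun z => ?_
    obtain ⟨f, rfl⟩ := Submodule.Quotient.mk_surjective _ z
    change α (Submodule.Quotient.mk _) = α (Submodule.Quotient.mk _) + α (Submodule.Quotient.mk _)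
    rw [← map_add, ← Submodule.Quotient.mk_add]
    congr 2
    exact LinearMap.ext fun p => smul_add (f p) x y
  map_smul' a x := by
    refine LinearMap.ext fun z => ?_
    obtain ⟨f, rfl⟩ := Submodule.Quotient.mk_surjective _ z
    change α (Submodule.Quotient.mk _) = α (Submodule.Quotient.mk _)
    congr 2
    exact LinearMap.ext fun p => (mul_smul (f p) a x).symm

omit [∀ l, Module R (P l)] [∀ l, IsScalarTower R A (P l)] in
lemma Costd.lift_apply_mk {m : Λ} (α : HomQuot A P R {μ | m < μ} (P m) M →ₗ[R] R) (x : M)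
    (f : P m →ₗ[A] A) : Costd.lift α x (Submodule.Quotient.mk f) =
      α (Submodule.Quotient.mk (LinearMap.toSpanSingleton A M x ∘ₗ f)) := rfl

omit [∀ l, Module R (P l)] [∀ l, IsScalarTower R A (P l)] in
lemma Costd.lift_comp {m : Λ} (α : HomQuot A P R {μ | m < μ} (P m) M →ₗ[R] R) (g : M' →ₗ[A] M) :
    Costd.lift α ∘ₗ g = Costd.lift (α ∘ₗ HomQuot.map R P _ (P m) g) := by
  refine LinearMap.ext fun x => LinearMap.ext fun z => ?_
  obtain ⟨f, rfl⟩ := Submodule.Quotient.mk_surjective _ z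
  rw [LinearMap.comp_apply, lift_apply_mk, lift_apply_mk, LinearMap.comp_apply, HomQuot.map_mk]
  congr 2
  ext
  simp

lemma StdCover.lift_injective (hP : StdCover R epi) (m : Λ) :
    Function.Injective (Costd.lift (R := R) (A := A) (P := P) (m := m) (M := M)) := by
  have := hP.proj
  have := hP.fin
  obtain ⟨n, k, q, hkq⟩ := exists_dual_basis (A := A) (P m)
  intro α β h
  refine LinearMap.ext fun z => ?_
  obtain ⟨g, rfl⟩ := Submodule.Quotient.mk_surjective _ z
  have hg : g = ∑ i, LinearMap.toSpanSingleton A M (g (q i)) ∘ₗ k i := by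
    ext x
    conv_lhs => rw [← hkq x, map_sum]
    simp
  rw [hg, ← Submodule.mkQ_apply, map_sum, map_sum, map_sum]
  exact Finset.sum_congr rfl fun i _ =>
    LinearMap.congr_fun (LinearMap.congr_fun h (g (q i))) (Submodule.Quotient.mk (k i))

lemma StdCover.lift_surjective (hP : StdCover R epi) (m : Λ) :
    Function.Surjective (Costd.lift (R := R) (A := A) (P := P) (m := m) (M := M)) := by
  have := hP.proj
  have := hP.fin
  obtain ⟨n, k, q, hkq⟩ := exists_dual_basis (A := A) (P m)
  intro φ
  let β : (P m →ₗ[A] M) →ₗ[R] R :=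
    { toFun g := ∑ i, φ (g (q i)) (Submodule.Quotient.mk (k i))
      map_add' g h := by simp [Finset.sum_add_distrib]
      map_smul' r g := by
        simp only [LinearMap.smul_apply, LinearMap.map_smul_of_tower, RingHom.id_apply,
          Finset.smul_sum] }
  have hβ : ∀ x f, β (LinearMap.toSpanSingleton A M x ∘ₗ f) = φ x (Submodule.Quotient.mk f) := by
    intro x f
    have hf : f = ∑ i, MulOpposite.op (f (q i)) • k i := by
      ext y
      conv_lhs => rw [← hkq y, map_sum]
      simp
    conv_rhs => rw [hf, ← Submodule.mkQ_apply, map_sum, map_sum]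
    change ∑ i, φ (f (q i) • x) (Submodule.Quotient.mk (k i)) = _
    exact Finset.sum_congr rfl fun i _ =>
      LinearMap.congr_fun (φ.map_smul (f (q i)) x) (Submodule.Quotient.mk (k i))
  have hW : homTrace A P R {μ | m < μ} (P m) M ≤ LinearMap.ker β := by
    intro g hg
    have hg' := mem_closure_of_range_le_trace g hg
    clear hg
    induction hg' using AddSubmonoid.closure_induction with
    | zero => exact zero_mem _
    | add x y _ _ hx hy => exact add_mem hx hy
    | mem g hg =>
      obtain ⟨ν, hν, F, h, rfl⟩ := hg
      obtain ⟨n', k', q', hkq'⟩ := exists_dual_basis (A := A) (P ν)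
      have hF : F ∘ₗ h = ∑ i, LinearMap.toSpanSingleton A M (F (q' i)) ∘ₗ (k' i ∘ₗ h) := by
        ext x
        rw [LinearMap.comp_apply]
        conv_lhs => rw [← hkq' (h x), map_sum]
        simp
      rw [LinearMap.mem_ker, hF, map_sum]
      refine Finset.sum_eq_zero fun i _ => ?_
      rw [hβ, (Submodule.Quotient.mk_eq_zero _).2, map_zero]
      exact fun x => mem_trace_of_hom hν _ _
  refine ⟨Submodule.liftQ _ β hW, LinearMap.ext fun x => LinearMap.ext fun z => ?_⟩
  obtain ⟨f, rfl⟩ := Submodule.Quotient.mk_surjective _ z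
  exact hβ x f

/-- Maps into `∇(m)` are the linear forms on homomorphisms `P(m) → M` modulo trace. -/
noncomputable def StdCover.liftEquiv (hP : StdCover R epi) (m : Λ) (M : Type) [AddCommGroup M]
    [Module R M] [Module A M] [IsScalarTower R A M] :
    (HomQuot A P R {μ | m < μ} (P m) M →ₗ[R] R) ≃ₗ[R] (M →ₗ[A] Costd R A P m) :=
  LinearEquiv.ofBijective
    { toFun := Costd.lift
      map_add' _ _ := rfl
      map_smul' _ _ := rfl } ⟨hP.lift_injective m, hP.lift_surjective m⟩

lemma StdCover.nonempty_hom_costd (hP : StdCover R epi) (m : Λ) :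
    Nonempty ((Δ m →ₗ[A] Costd R A P m) ≃ₗ[R] R) :=
  ⟨(hP.liftEquiv m (Δ m)).symm ≪≫ₗ
    (LinearEquiv.congrLeft R R (hP.stdEquiv m).symm) ≪≫ₗ LinearMap.ringLmapEquivSelf R R R⟩

lemma StdCover.hom_costd_eq_zero (hP : StdCover R epi) {l m : Λ} (hlm : l ≠ m)
    (f : Δ l →ₗ[A] Costd R A P m) : f = 0 := by
  have := hP.homQuot_subsingleton (S := {l}) (Ne.symm hlm) (.std l rfl)
  have := (hP.liftEquiv m (Δ l)).symm.toEquiv.subsingleton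
  exact Subsingleton.elim _ _

omit [PartialOrder Λ] in
lemma StdClass.extVanish {N : Type} [AddCommGroup N] [Module A N] {i : ℕ}
    (hN : ∀ l ∈ S, extVanish A (Δ l) N (i + 1)) (h : StdClass R A Δ S M) :
    extVanish A M N (i + 1) := by
  induction h with
  | zero M => exact extVanish_of_subsingleton i
  | std l hl => exact hN l hl
  | retract X Y a b hab _ ih => exact extVanish_of_retract a b (LinearMap.ext hab) i ih
  | ext M K _ _ ih₁ ih₂ =>
    exact extVanish_of_exact K.subtype K.mkQ (LinearMap.exact_subtype_mkQ K) K.subtype_injective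
      K.mkQ_surjective i ih₁ ih₂

lemma StdCover.extVanish_costd_one (hP : StdCover R epi) (l m : Λ) :
    extVanish A (Δ l) (Costd R A P m) 1 := by
  have := hP.proj
  have hex : Function.Exact (LinearMap.ker (epi l)).subtype (epi l) :=
    LinearMap.exact_subtype_ker_map _
  refine extVanish_one_of_extend (LinearMap.ker (epi l)).subtype (epi l)
    hex (Submodule.subtype_injective _) (hP.surj l) fun f => ?_
  obtain ⟨α, rfl⟩ := hP.lift_surjective m f
  have h1 := HomQuot.map_injective (R := R) (P := P) (T := {μ | m < μ}) (Q := P m)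
    (hP.tracePure_std (fun a b hab ha => lt_of_lt_of_le ha hab) l)
    (Submodule.subtype_injective _) hex (hP.surj l)
  have h2 := HomQuot.map_exact (R := R) (P := P) (T := {μ | m < μ}) (Q := P m)
    (Submodule.subtype_injective _) hex (hP.surj l)
  have h3 := HomQuot.map_surjective (R := R) (P := P) (T := {μ | m < μ}) (Q := P m) (hP.surj l)
  have := (hP.homQuot_finite_and_projective m (.std (R := R) (A := A) (Δ := Δ) l rfl)).2
  obtain ⟨s, hs⟩ := Module.projective_lifting_property _ LinearMap.id h3
  obtain ⟨e, he, -⟩ := h2.splitSurjectiveEquiv h1 ⟨s, hs⟩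
  refine ⟨Costd.lift (α ∘ₗ LinearMap.fst R _ _ ∘ₗ e.toLinearMap), ?_⟩
  rw [Costd.lift_comp, he]
  congr 1
  ext
  simp

lemma StdCover.extVanish_costd (hP : StdCover R epi) (l m : Λ) (i : ℕ) :
    extVanish A (Δ l) (Costd R A P m) (i + 1) := by
  have := hP.proj
  induction i generalizing l with
  | zero => exact hP.extVanish_costd_one l m
  | succ i ih =>
    exact extVanish_succ_of_projective (LinearMap.ker (epi l)).subtype (epi l)
      (LinearMap.exact_subtype_ker_map _) (Submodule.subtype_injective _) (hP.surj l) i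
      ((hP.ker l).extVanish fun _ _ => ih _)

end Costandard

section Unique

variable {R : Type} [CommRing R] {A : Type} [Ring A] [Algebra R A] {Λ : Type} [PartialOrder Λ]
  {Δ : Λ → Type} [∀ l, AddCommGroup (Δ l)] [∀ l, Module R (Δ l)]
  [∀ l, Module A (Δ l)] [∀ l, IsScalarTower R A (Δ l)]
  {P : Λ → Type} [∀ l, AddCommGroup (P l)] [∀ l, Module R (P l)]
  [∀ l, Module A (P l)] [∀ l, IsScalarTower R A (P l)]
  {epi : ∀ l, P l →ₗ[A] Δ l} {S : Set Λ}
  {M M' : Type} [AddCommGroup M] [Module R M] [Module A M] [IsScalarTower R A M]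
  [AddCommGroup M'] [Module R M'] [Module A M'] [IsScalarTower R A M']
  {N : Type} [AddCommGroup N] [Module R N] [Module A N] [IsScalarTower R A N]

namespace StdCover

variable (hP : StdCover R epi) {m : Λ} (hN : ∀ l, l ≠ m → ∀ f : Δ l →ₗ[A] N, f = 0)
include hP hN

omit [Module R N] [IsScalarTower R A N] in
lemma trace_eq_bot_of_hom : stdTrace A P {μ | m < μ} N = ⊥ :=
  trace_eq_bot fun μ hμ => (hP.stdClass_cover μ).hom_eq_zero fun l hl =>
    hN l (by rintro rfl; exact not_le_of_gt hμ hl)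

lemma exists_hom_cover_equiv (e : (Δ m →ₗ[A] N) ≃ₗ[R] R) :
    Nonempty ((P m →ₗ[A] N) ≃ₗ[R] R) := by
  let c : (Δ m →ₗ[A] N) →ₗ[R] (P m →ₗ[A] N) :=
    { toFun f := f ∘ₗ epi m, map_add' _ _ := rfl, map_smul' _ _ := rfl }
  refine ⟨(LinearEquiv.ofBijective c ⟨?_, fun f => ?_⟩).symm ≪≫ₗ e⟩
  · intro f g hfg
    ext x
    obtain ⟨p, rfl⟩ := hP.surj m x
    exact LinearMap.congr_fun hfg p
  · exact exists_comp_eq_of_ker_le (hP.surj m) fun x hx => by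
      exact LinearMap.congr_fun ((hP.ker m).hom_eq_zero (fun l hl => hN l (ne_of_gt hl))
        (f ∘ₗ Submodule.subtype _)) ⟨x, hx⟩

/-- The pairing `α ↦ ([g] ↦ φ (α ∘ g))`. -/
def pairing (φ : (P m →ₗ[A] N) →ₗ[R] R) (α : M →ₗ[A] N) :
    HomQuot A P R {μ | m < μ} (P m) M →ₗ[R] R :=
  Submodule.liftQ _ (φ ∘ₗ postcomp R (P m) α) fun g hg => by
    have h1 : α ∘ₗ g = 0 := by
      ext x
      have h2 := map_mem_trace α (hg x)
      rwa [hP.trace_eq_bot_of_hom hN] at h2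
    have h3 : φ (α ∘ₗ g) = 0 := by rw [h1, map_zero]
    exact h3

lemma pairing_mk (φ : (P m →ₗ[A] N) →ₗ[R] R) (α : M →ₗ[A] N) (g : P m →ₗ[A] M) :
    hP.pairing hN φ α (Submodule.Quotient.mk g) = φ (α ∘ₗ g) := rfl

lemma pairing_add (φ : (P m →ₗ[A] N) →ₗ[R] R) (α β : M →ₗ[A] N) :
    hP.pairing hN φ (α + β) = hP.pairing hN φ α + hP.pairing hN φ β := by
  refine LinearMap.ext fun z => ?_
  obtain ⟨g, rfl⟩ := Submodule.Quotient.mk_surjective _ z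
  rw [LinearMap.add_apply, pairing_mk, pairing_mk, pairing_mk, LinearMap.add_comp, map_add]

lemma pairing_comp (φ : (P m →ₗ[A] N) →ₗ[R] R) (α : M →ₗ[A] N) (g : M' →ₗ[A] M) :
    hP.pairing hN φ (α ∘ₗ g) = hP.pairing hN φ α ∘ₗ HomQuot.map R P _ (P m) g := by
  refine LinearMap.ext fun z => ?_
  obtain ⟨f, rfl⟩ := Submodule.Quotient.mk_surjective _ z
  rfl

lemma pairing_injective (φ : (P m →ₗ[A] N) ≃ₗ[R] R) (h : StdClass R A Δ S M) (α : M →ₗ[A] N)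
    (hα : hP.pairing hN φ.toLinearMap α = 0) : α = 0 := by
  have := hP.proj
  induction h with
  | zero M => exact LinearMap.ext fun x => by rw [Subsingleton.elim x 0, map_zero, map_zero]
  | std l hl =>
    by_cases hlm : l = m
    · subst hlm
      have h1 := LinearMap.congr_fun hα (Submodule.Quotient.mk (epi l))
      have h2 : α ∘ₗ epi l = 0 := φ.injective (h1.trans (map_zero φ).symm)
      ext x
      obtain ⟨p, rfl⟩ := hP.surj l x
      exact LinearMap.congr_fun h2 p
    · exact hN l hlm α
  | retract X Y a b hab _ ih =>
    have h1 := ih (α ∘ₗ b) (by rw [pairing_comp, hα, LinearMap.zero_comp])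
    ext x
    rw [← hab x]
    exact LinearMap.congr_fun h1 (a x)
  | ext M K _ _ ih₁ ih₂ =>
    have h1 := ih₁ (α ∘ₗ K.subtype) (by rw [pairing_comp, hα, LinearMap.zero_comp])
    obtain ⟨β, rfl⟩ := exists_comp_eq_of_ker_le (f := α) K.mkQ_surjective fun x hx =>
      LinearMap.congr_fun h1 ⟨x, by rwa [K.ker_mkQ] at hx⟩
    have h2 : hP.pairing hN φ.toLinearMap β = 0 := by
      rw [pairing_comp] at hα
      refine LinearMap.ext fun z => ?_
      obtain ⟨y, rfl⟩ := HomQuot.map_surjective (R := R) (P := P) (T := {μ | m < μ}) (Q := P m)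
        K.mkQ_surjective z
      exact LinearMap.congr_fun hα y
    rw [ih₂ β h2, LinearMap.zero_comp]

lemma pairing_surjective (φ : (P m →ₗ[A] N) ≃ₗ[R] R) (hN' : ∀ l, extVanish A (Δ l) N 1)
    (h : StdClass R A Δ S M) : Function.Surjective (hP.pairing (M := M) hN φ.toLinearMap) := by
  have := hP.proj
  induction h with
  | zero M =>
    intro β
    have : Subsingleton (HomQuot A P R {μ | m < μ} (P m) M) :=
      (Submodule.mkQ_surjective _).subsingleton
    exact ⟨0, Subsingleton.elim _ _⟩
  | std l hl =>
    intro β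
    by_cases hlm : l = m
    · subst hlm
      obtain ⟨f, hf⟩ := φ.surjective (β (Submodule.Quotient.mk (epi l)))
      obtain ⟨α, rfl⟩ := exists_comp_eq_of_ker_le (f := f) (hP.surj l) fun x hx =>
        LinearMap.congr_fun ((hP.ker l).hom_eq_zero (fun l hl => hN l (ne_of_gt hl))
          (f ∘ₗ Submodule.subtype _)) ⟨x, hx⟩
      refine ⟨α, LinearMap.ext fun z => ?_⟩
      obtain ⟨r, rfl⟩ := (hP.stdEquiv l).surjective z
      rw [stdEquiv_apply, map_smul, map_smul, ← hf]
      rfl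
    · have := hP.homQuot_subsingleton (S := {l}) (Ne.symm hlm) (.std l rfl)
      exact ⟨0, Subsingleton.elim _ _⟩
  | retract X Y a b hab _ ih =>
    intro β
    obtain ⟨γ, hγ⟩ := ih (β ∘ₗ HomQuot.map R P _ (P m) b)
    refine ⟨γ ∘ₗ a, ?_⟩
    rw [pairing_comp, hγ, LinearMap.comp_assoc, HomQuot.map_retract hab, LinearMap.comp_id]
  | ext M K _ h₂ ih₁ ih₂ =>
    intro β
    obtain ⟨γ, hγ⟩ := ih₁ (β ∘ₗ HomQuot.map R P _ (P m) K.subtype)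
    obtain ⟨γ', rfl⟩ := exists_extend_of_extVanish K.subtype K.mkQ (LinearMap.exact_subtype_mkQ K)
      K.subtype_injective K.mkQ_surjective (h₂.extVanish fun l _ => hN' l) γ
    obtain ⟨-, h4, h5⟩ := hP.homQuot_exact m K h₂
    obtain ⟨δ, hδ⟩ := exists_comp_eq_of_ker_le (f := β - hP.pairing hN φ.toLinearMap γ') h5
      fun x hx => by
        obtain ⟨y, rfl⟩ := (h4 x).1 hx
        have h6 := LinearMap.congr_fun hγ y
        rw [pairing_comp] at h6
        rw [LinearMap.sub_apply, sub_eq_zero]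
        exact h6.symm
    obtain ⟨ε, rfl⟩ := ih₂ δ
    refine ⟨ε ∘ₗ K.mkQ + γ', ?_⟩
    rw [pairing_add, pairing_comp, hδ, sub_add_cancel]

theorem nonempty_equiv_costd (e : (Δ m →ₗ[A] N) ≃ₗ[R] R) (hN' : ∀ l, extVanish A (Δ l) N 1) :
    Nonempty (N ≃ₗ[A] Costd R A P m) := by
  obtain ⟨φ⟩ := hP.exists_hom_cover_equiv hN e
  let Θ : N →ₗ[A] Costd R A P m :=
    { toFun n := hP.pairing hN φ.toLinearMap (LinearMap.toSpanSingleton A N n) ∘ₗ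
        (homQuotOpEquiv R _ (P m)).symm.toLinearMap
      map_add' x y := by
        rw [← LinearMap.add_comp, ← pairing_add]
        congr 2
        ext
        simp
      map_smul' a x := by
        refine LinearMap.ext fun z => ?_
        obtain ⟨f, rfl⟩ := Submodule.Quotient.mk_surjective _ z
        change φ _ = φ _
        congr 1
        exact LinearMap.ext fun p => (mul_smul (f p) a x).symm }
  refine ⟨LinearEquiv.ofBijective Θ ⟨?_, fun α => ?_⟩⟩
  · rw [injective_iff_map_eq_zero]
    intro n hn
    have h1 : hP.pairing hN φ.toLinearMap (LinearMap.toSpanSingleton A N n) = 0 :=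
      LinearMap.ext fun z => by
        have h2 := LinearMap.congr_fun hn (homQuotOpEquiv R _ (P m) z)
        simpa [Θ] using h2
    have h3 := LinearMap.congr_fun (hP.pairing_injective hN φ hP.reg _ h1) 1
    simpa using h3
  · obtain ⟨β, hβ⟩ := hP.pairing_surjective hN φ hN' hP.reg
      (α ∘ₗ (homQuotOpEquiv R _ (P m)).toLinearMap)
    refine ⟨β 1, LinearMap.ext fun z => ?_⟩
    have h1 : LinearMap.toSpanSingleton A N (β 1) = β := by
      ext
      simp
    obtain ⟨z, rfl⟩ := (homQuotOpEquiv R _ (P m)).surjective z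
    have h2 := LinearMap.congr_fun hβ z
    simpa [Θ, h1] using h2

end StdCover

end Unique

/-- Transport of a split quasi-hereditary structure of `Aᵐᵒᵖ` to a family of dual modules. -/
noncomputable def SplitQH.congrDual {R : Type} [CommRing R] {A : Type} [Ring A] [Algebra R A]
    {Λ : Type} [Fintype Λ] [PartialOrder Λ] {E N : Λ → Type}
    [∀ l, AddCommGroup (E l)] [∀ l, Module R (E l)]
    [∀ l, Module Aᵐᵒᵖ (E l)] [∀ l, IsScalarTower R Aᵐᵒᵖ (E l)]
    [∀ l, AddCommGroup (N l)] [∀ l, Module R (N l)] [∀ l, Module A (N l)]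
    [∀ l, IsScalarTower R A (N l)] (h : SplitQH R Aᵐᵒᵖ Λ E)
    (e : ∀ l, E l ≃ₗ[Aᵐᵒᵖ] (N l →ₗ[R] R)) : SplitQH R Aᵐᵒᵖ Λ (fun l => N l →ₗ[R] R) :=
  h.congr e

noncomputable section

/-- Existence and uniqueness (up to isomorphism) of the costandard modules of
a split quasi-hereditary algebra: there is a family `{∇(λ)}` such that `(A^op, {D∇(λ)})` is
split quasi-hereditary and `Ext^i_A(Δ(λ), ∇(β)) ≅ R` if `i = 0` and `λ = β`, and vanishes
otherwise; and any two such families are pointwise isomorphic. -/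
theorem costandard_exists_unique
    (R : Type) [CommRing R] [IsNoetherianRing R]
    (A : Type) [Ring A] [Algebra R A]
    (Λ : Type) [Fintype Λ] [PartialOrder Λ]
    (Δ : Λ → Type) [∀ l, AddCommGroup (Δ l)] [∀ l, Module R (Δ l)]
    [∀ l, Module A (Δ l)] [∀ l, IsScalarTower R A (Δ l)]
    (h : SplitQH R A Λ Δ) :
    Nonempty (CostandardFamily R A Λ Δ) ∧
    ∀ (C₁ C₂ : CostandardFamily R A Λ Δ) (l : Λ),
      Nonempty (C₁.Nab l ≃ₗ[A] C₂.Nab l) := by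
  let _ : ∀ l, Module R (h.P l) := fun l => Module.compHom _ (algebraMap R A)
  have _ : ∀ l, IsScalarTower R A (h.P l) := fun l => .of_algebraMap_smul fun _ _ => rfl
  have := h.algFin
  have := h.algProj
  have := h.deltaFinR
  have := h.deltaProjR
  have hP := h.exists_stdCover
  have hA : InAdd A (∀ l, h.P l) A := h.add_gen (ModuleCat.of A A) inferInstance inferInstance
  have hop := hP.splitQH_op hA
  have := hop.deltaFinR
  have := hop.deltaProjR
  refine ⟨⟨⟨fun l => Costd R A (fun l => h.P l) l, ⟨⟨hop.congrDual fun l => evalEquivOp _⟩,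
    hP.nonempty_hom_costd, fun l m hlm f => hP.hom_costd_eq_zero hlm f, fun l m i hi => ?_⟩⟩⟩,
    fun C₁ C₂ l => ?_⟩
  · obtain ⟨i, rfl⟩ := Nat.exists_eq_succ_of_ne_zero hi.ne'
    exact hP.extVanish_costd l m i
  · have key : ∀ C : CostandardFamily R A Λ Δ,
        Nonempty (C.Nab l ≃ₗ[A] Costd R A (fun l => h.P l) l) := fun C =>
      hP.nonempty_equiv_costd (fun k hk f => C.cost.2.2.1 k l hk f) (C.cost.2.1 l).some
        fun k => C.cost.2.2.2 k l 1 one_pos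
    exact ⟨(key C₁).some ≪≫ₗ (key C₂).some.symm⟩

end
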